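/- Fix real constants a_R > 0 and a_I, set p₁ = q₁ = a_R/(a_R²+a_I²), p₂ = −q₂ = −a_I/(a_R²+a_I²), let b_R, b_I, f_R, f_I : [0,1]×[0,1) → ℝ be continuously differentiable in the space variable and, for each fixed space point, given on [0,1) by power series in t with coefficients bounded uniformly in n and the space variable, and define β(x,y,t) = [a_R(b_R(y,t)−f_R(x,t)) + a_I(b_I(y,t)−f_I(x,t))]/(a_R²+a_I²), β_c(x,y,t) = [a_R(b_I(y,t)−f_I(x,t)) − a_I(b_R(y,t)−f_R(x,t))]/(a_R²+a_I²). Then for every t₀ ∈ (0,1), the system k_xx = k_yy + βk + β_c k_c + p₁k_t + p₂k_{c,t}, k_{c,xx} = k_{c,yy} − β_c k + βk_c + q₁k_{c,t} + q₂k_t on Ω = {(x,y) : 0 ≤ y ≤ x ≤ 1}, with boundary conditions k(x,x,t) = −(1/2)∫₀ˣβ(γ,γ,t)dγ, k_c(x,x,t) = (1/2)∫₀ˣβ_c(γ,γ,t)dγ, k_x(x,0,t) = k_{c,x}(x,0,t) = 0, and k(0,0,t) = k_c(0,0,t) = 0, has a unique twice continuously differentiable solution (k, k_c) on Ω×(0,t₀),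 and there exists M > 0 such that |k(x,y,t)| ≤ M e^{M(x²−y²)} and |k_c(x,y,t)| ≤ M e^{M(x²−y²)} on Ω×(0,t₀). -/

import Mathlib

open Set intervalIntegral

/-- The triangle `Ω = {(x,y) : 0 ≤ y ≤ x ≤ 1}`. -/
def Omega : Set (ℝ × ℝ) := {p : ℝ × ℝ | 0 ≤ p.2 ∧ p.2 ≤ p.1 ∧ p.1 ≤ 1}

/-- Partial derivative of a three-variable kernel in its first variable. -/
noncomputable def pX (k : ℝ → ℝ → ℝ → ℝ) (x y t : ℝ) : ℝ := deriv (fun x' => k x' y t) x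

/-- Second partial derivative of a three-variable kernel in its first variable. -/
noncomputable def pXX (k : ℝ → ℝ → ℝ → ℝ) (x y t : ℝ) : ℝ :=
  deriv (fun x' => deriv (fun x'' => k x'' y t) x') x

/-- Second partial derivative of a three-variable kernel in its second variable. -/
noncomputable def pYY (k : ℝ → ℝ → ℝ → ℝ) (x y t : ℝ) : ℝ :=
  deriv (fun y' => deriv (fun y'' => k x y'' t) y') y

/-- Partial derivative of a three-variable kernel in its last (time) variable. -/
noncomputable def pT (k : ℝ → ℝ → ℝ → ℝ) (x y t : ℝ) : ℝ := deriv (fun t' => k x y t') t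

/-- `f(x,t)` is continuously differentiable in the space variable and, for each fixed
space point, given on `[0,1)` by a power series in `t` with uniformly bounded
coefficients. -/
def SpaceC1TimeAnalytic (f : ℝ → ℝ → ℝ) : Prop :=
  (∀ t ∈ Set.Ico (0:ℝ) 1, ContDiffOn ℝ 1 (fun x => f x t) (Set.Icc 0 1))
  ∧ ∃ (c : ℕ → ℝ → ℝ) (C : ℝ),
      (∀ n, ∀ x ∈ Set.Icc (0:ℝ) 1, |c n x| ≤ C)
      ∧ ∀ x ∈ Set.Icc (0:ℝ) 1, ∀ t ∈ Set.Ico (0:ℝ) 1, f x t = ∑' n, c n x * t ^ n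

/-- `(k, k_c)` is a classical solution on `Ω × (0,t₀)` of the Neumann backstepping
kernel system. -/
def IsNeumannKernelSol (β βc : ℝ → ℝ → ℝ → ℝ) (p₁ p₂ q₁ q₂ t₀ : ℝ)
    (k kc : ℝ → ℝ → ℝ → ℝ) : Prop :=
  (∀ t ∈ Set.Ioo (0:ℝ) t₀, ContDiffOn ℝ 2 (fun p : ℝ × ℝ => k p.1 p.2 t) Omega)
  ∧ (∀ t ∈ Set.Ioo (0:ℝ) t₀, ContDiffOn ℝ 2 (fun p : ℝ × ℝ => kc p.1 p.2 t) Omega)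
  ∧ (∀ x y : ℝ, (x, y) ∈ Omega → ∀ t ∈ Set.Ioo (0:ℝ) t₀,
      DifferentiableAt ℝ (fun t' => k x y t') t ∧ DifferentiableAt ℝ (fun t' => kc x y t') t)
  ∧ (∀ x y : ℝ, (x, y) ∈ Omega → ∀ t ∈ Set.Ioo (0:ℝ) t₀,
      pXX k x y t
        = pYY k x y t + β x y t * k x y t + βc x y t * kc x y t
          + p₁ * pT k x y t + p₂ * pT kc x y t
      ∧ pXX kc x y t
        = pYY kc x y t - βc x y t * k x y t + β x y t * kc x y t
          + q₁ * pT kc x y t + q₂ * pT k x y t)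
  ∧ (∀ x ∈ Set.Icc (0:ℝ) 1, ∀ t ∈ Set.Ioo (0:ℝ) t₀,
      k x x t = -(1 / 2) * ∫ γ in (0:ℝ)..x, β γ γ t
      ∧ kc x x t = (1 / 2) * ∫ γ in (0:ℝ)..x, βc γ γ t
      ∧ pX k x 0 t = 0 ∧ pX kc x 0 t = 0)
  ∧ (∀ t ∈ Set.Ioo (0:ℝ) t₀, k 0 0 t = 0 ∧ kc 0 0 t = 0)

/-!
In the characteristic coordinates `ξ = x + y`, `η = x - y`, the complex kernel `Q = k + i k_c`
satisfies `4 ∂₁∂₂Q = ℓ Q + p ∂ₜQ` with `ℓ = β - i β_c` and `p = p₁ - i p₂`. The corner and Neumann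
conditions on the edge `y = 0` say that `Q` vanishes on the diagonal `ξ = η`, and the condition on
the edge `y = x` prescribes `Q` on the axis `η = 0`.

Existence: the power series extend `ℓ` to complex times, as a holomorphic function with values in
the bounded continuous functions on the triangle. The successive approximations lose one time
derivative per step, which by Cauchy's estimate costs a factor `m`, whereas the double integral over
a rectangle gains a factor `1 / m²`; hence their sum converges for `|t| < R`, for every `R < 1`. The
solution is then bounded up to the time `t₀`, and the exponential bound follows from `y ≤ x`.

Uniqueness: a solution is only assumed to be differentiable in time. By Osgood's theorem, every
time interval contains a subinterval on which the difference `Q` of two solutions is Lipschitz in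
time, uniformly in space. There the equation, integrated over rectangles, may be tested against
`((t - a) (b - t)) ^ n` times a holomorphic function of time. Each integration by parts in time
exchanges one factor `(t - a) (b - t)` for one double integral in space, so that the integral of
`((t - a) (b - t)) ^ n Q` decays factorially in `n`. If `Q` did not vanish at the midpoint, this
integral would decay only geometrically. Hence `Q` vanishes on a dense set of times, and by
continuity it vanishes.
-/

open scoped BoundedContinuousFunction

section PlaneCalculus

variable {E : Type*} [NormedAddCommGroup E] [NormedSpace ℝ E] {F : ℝ × ℝ → E}

theorem contDiff_succ_of_hasDerivAt_partials {n : ℕ} {f u v : ℝ × ℝ → E}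
    (hu : ∀ x y, HasDerivAt (fun x' => f (x', y)) (u (x, y)) x)
    (hv : ∀ x y, HasDerivAt (fun y' => f (x, y')) (v (x, y)) y)
    (cu : ContDiff ℝ n u) (cv : ContDiff ℝ n v) : ContDiff ℝ (n + 1) f := by
  have key : ∀ {w : ℝ × ℝ → E}, ContDiff ℝ n w →
      ContDiff ℝ n fun z => ContinuousLinearMap.toSpanSingleton ℝ (w z) :=
    (ContinuousLinearMap.toSpanSingletonCLE (𝕜 := ℝ) (E := E)).contDiff.comp
  refine contDiff_succ_iff_hasFDerivAt.2
    ⟨fun z => (ContinuousLinearMap.toSpanSingleton ℝ (u z)).coprod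
      (ContinuousLinearMap.toSpanSingleton ℝ (v z)), ?_, fun z => ?_⟩
  · have fst_part := (key cu).clm_comp (contDiff_const (c := ContinuousLinearMap.fst ℝ ℝ ℝ))
    have snd_part := (key cv).clm_comp (contDiff_const (c := ContinuousLinearMap.snd ℝ ℝ ℝ))
    convert fst_part.add snd_part using 2 with p
    ext <;> simp
  · exact (hasStrictFDerivAt_uncurry_coprod (f := fun x y => f (x, y)) (u := z)
      (f₁ := fun x y => ContinuousLinearMap.toSpanSingleton ℝ (u (x, y)))
      (f₂ := fun x y => ContinuousLinearMap.toSpanSingleton ℝ (v (x, y)))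
      (Filter.Eventually.of_forall fun q => (hu q.1 q.2).hasFDerivAt)
      (Filter.Eventually.of_forall fun q => (hv q.1 q.2).hasFDerivAt)
      (key cu).continuous.continuousAt (key cv).continuous.continuousAt).hasFDerivAt

theorem hasDerivAt_partials_of_hasFDerivAt {f : ℝ × ℝ → E} {f' : ℝ × ℝ →L[ℝ] E} {z : ℝ × ℝ}
    (hf : HasFDerivAt f f' z) :
    HasDerivAt (fun x => f (x, z.2)) (f' (1, 0)) z.1 ∧
      HasDerivAt (fun y => f (z.1, y)) (f' (0, 1)) z.2 :=
  ⟨hf.comp_hasDerivAt z.1 ((hasDerivAt_id z.1).prodMk (hasDerivAt_const z.1 z.2)),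
    hf.comp_hasDerivAt z.2 ((hasDerivAt_const z.2 z.1).prodMk (hasDerivAt_id z.2))⟩

theorem hasDerivAt_intervalIntegral_of_continuous [CompleteSpace E] {F' : ℝ × ℝ → E}
    (hF : Continuous F) (hF' : Continuous F')
    (hd : ∀ s y, HasDerivAt (fun y' => F (s, y')) (F' (s, y)) y) (a b y : ℝ) :
    HasDerivAt (fun y' => ∫ s in a..b, F (s, y')) (∫ s in a..b, F' (s, y)) y := by
  obtain ⟨B, hB⟩ := ((isCompact_uIcc (a := a) (b := b)).prod
    (isCompact_closedBall y 1)).exists_bound_of_continuousOn hF'.continuousOn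
  refine (intervalIntegral.hasDerivAt_integral_of_dominated_loc_of_deriv_le
    (F := fun y' s => F (s, y')) (F' := fun y' s => F' (s, y')) (bound := fun _ => B)
    (Metric.closedBall_mem_nhds y one_pos) ?_ ?_ ?_ ?_ ?_ ?_).2
  · exact Filter.Eventually.of_forall fun y' =>
      (hF.comp (Continuous.prodMk_left y')).aestronglyMeasurable
  · exact (hF.comp (Continuous.prodMk_left y)).intervalIntegrable _ _
  · exact (hF'.comp (Continuous.prodMk_left y)).aestronglyMeasurable
  · exact Filter.Eventually.of_forall fun s hs y' hy' => hB (s, y') ⟨uIoc_subset_uIcc hs, hy'⟩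
  · exact intervalIntegrable_const
  · exact Filter.Eventually.of_forall fun s _ y' _ => hd s y'

theorem hasDerivAt_primitive_fst [CompleteSpace E] (hF : Continuous F) (x y : ℝ) :
    HasDerivAt (fun x' => ∫ s in (0 : ℝ)..x', F (s, y)) (F (x, y)) x :=
  ((hF.comp (Continuous.prodMk_left y)).integral_hasStrictDerivAt 0 x).hasDerivAt

theorem continuous_primitive_fst (hF : Continuous F) :
    Continuous fun z : ℝ × ℝ => ∫ s in (0 : ℝ)..z.1, F (s, z.2) :=
  continuous_parametric_intervalIntegral_of_continuous
    (f := fun (z : ℝ × ℝ) s => F (s, z.2)) (by fun_prop) continuous_fst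

theorem contDiff_primitive_fst [CompleteSpace E] {n : ℕ} (hF : ContDiff ℝ n F) :
    ContDiff ℝ n fun z : ℝ × ℝ => ∫ s in (0 : ℝ)..z.1, F (s, z.2) := by
  induction n generalizing F with
  | zero => exact contDiff_zero.2 (continuous_primitive_fst hF.continuous)
  | succ n ih =>
    obtain ⟨F', cF', hF'⟩ := contDiff_succ_iff_hasFDerivAt.1 hF
    have cF'₂ : ContDiff ℝ n fun z => F' z (0, 1) := cF'.clm_apply contDiff_const
    exact contDiff_succ_of_hasDerivAt_partials
      (v := fun z => ∫ s in (0 : ℝ)..z.1, F' (s, z.2) (0, 1))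
      (hasDerivAt_primitive_fst hF.continuous)
      (fun x y => hasDerivAt_intervalIntegral_of_continuous hF.continuous cF'₂.continuous
        (fun s y => (hasDerivAt_partials_of_hasFDerivAt (hF' (s, y))).2) 0 x y)
      (hF.of_le (by norm_cast; omega)) (ih cF'₂)

theorem contDiff_primitive_snd [CompleteSpace E] {n : ℕ} (hF : ContDiff ℝ n F) :
    ContDiff ℝ n fun z : ℝ × ℝ => ∫ τ in (0 : ℝ)..z.2, F (z.1, τ) :=
  (contDiff_primitive_fst (hF.comp (contDiff_snd.prodMk contDiff_fst))).comp
    (contDiff_snd.prodMk contDiff_fst)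

/-- The primitive of `F` with respect to both variables; it vanishes on the axes. -/
noncomputable def doublePrimitive (F : ℝ × ℝ → E) (z : ℝ × ℝ) : E :=
  ∫ τ in (0 : ℝ)..z.2, ∫ s in (0 : ℝ)..z.1, F (s, τ)

variable [CompleteSpace E]

theorem hasDerivAt_doublePrimitive_snd (hF : Continuous F) (x y : ℝ) :
    HasDerivAt (fun y' => doublePrimitive F (x, y')) (∫ s in (0 : ℝ)..x, F (s, y)) y :=
  (((continuous_primitive_fst hF).comp (Continuous.prodMk_right x)).integral_hasStrictDerivAt
    0 y).hasDerivAt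

theorem hasDerivAt_doublePrimitive_fst (hF : Continuous F) (x y : ℝ) :
    HasDerivAt (fun x' => doublePrimitive F (x', y)) (∫ τ in (0 : ℝ)..y, F (x, τ)) x :=
  hasDerivAt_intervalIntegral_of_continuous (F := fun z => ∫ s in (0 : ℝ)..z.2, F (s, z.1))
    (F' := fun z => F (z.2, z.1)) ((continuous_primitive_fst hF).comp continuous_swap)
    (hF.comp continuous_swap) (fun τ x => hasDerivAt_primitive_fst hF x τ) 0 y x

theorem contDiff_doublePrimitive {n : ℕ} (hF : ContDiff ℝ n F) :
    ContDiff ℝ (n + 1) (doublePrimitive F) :=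
  contDiff_succ_of_hasDerivAt_partials (u := fun z => ∫ τ in (0 : ℝ)..z.2, F (z.1, τ))
    (v := fun z => ∫ s in (0 : ℝ)..z.1, F (s, z.2))
    (hasDerivAt_doublePrimitive_fst hF.continuous) (hasDerivAt_doublePrimitive_snd hF.continuous)
    (contDiff_primitive_snd hF) (contDiff_primitive_fst hF)

theorem contDiff_primitive {n : ℕ} {h : ℝ → E} (hh : ContDiff ℝ n h) :
    ContDiff ℝ (n + 1) fun x => ∫ s in (0 : ℝ)..x, h s := by
  have hd : ∀ x, HasDerivAt (fun x => ∫ s in (0 : ℝ)..x, h s) (h x) x := fun x =>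
    (hh.continuous.integral_hasStrictDerivAt 0 x).hasDerivAt
  refine contDiff_succ_iff_deriv.2 ⟨fun x => (hd x).differentiableAt, by simp, ?_⟩
  rwa [funext fun x => (hd x).deriv]

end PlaneCalculus

section WaveOperator

variable {E G : Type*} [NormedAddCommGroup E] [NormedSpace ℝ E] [NormedAddCommGroup G]
  [NormedSpace ℝ G]

theorem deriv_deriv_comp_line {V : Type*} [NormedAddCommGroup V] [NormedSpace ℝ V] {f : V → E}
    {z v : V} {t : ℝ} (hf : ContDiffAt ℝ 2 f (z + t • v)) :
    deriv (fun s => deriv (fun r => f (z + r • v)) s) t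
      = fderiv ℝ (fderiv ℝ f) (z + t • v) v v := by
  have line : ∀ s : ℝ, HasDerivAt (fun r : ℝ => z + r • v) v s := fun s => by
    simpa using ((hasDerivAt_id s).smul_const v).const_add z
  have first : ∀ᶠ s in nhds t, deriv (fun r => f (z + r • v)) s = fderiv ℝ f (z + s • v) v := by
    have nearby : ∀ᶠ w in nhds (z + t • v), ContDiffAt ℝ 2 f w := hf.eventually (by simp)
    filter_upwards [(line t).continuousAt.eventually nearby] with s hs
    have dfs : HasFDerivAt f (fderiv ℝ f (z + s • v)) (z + s • v) :=
      (hs.differentiableAt two_ne_zero).hasFDerivAt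
    exact (dfs.comp_hasDerivAt s (line s)).deriv
  have second : HasFDerivAt (fderiv ℝ f) (fderiv ℝ (fderiv ℝ f) (z + t • v)) (z + t • v) :=
    ((hf.fderiv_right (m := 1) (by norm_num)).differentiableAt one_ne_zero).hasFDerivAt
  have along : HasDerivAt (fun s : ℝ => fderiv ℝ f (z + s • v))
      (fderiv ℝ (fderiv ℝ f) (z + t • v) v) t :=
    second.comp_hasDerivAt t (line t)
  rw [Filter.EventuallyEq.deriv_eq first]
  simpa using (along.clm_apply (hasDerivAt_const t v)).deriv

/-- The mixed second derivative `∂₁∂₂f`. -/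
noncomputable def mixedDeriv (f : ℝ × ℝ → E) (z : ℝ × ℝ) : E :=
  fderiv ℝ (fderiv ℝ f) z (1, 0) (0, 1)

theorem hasDerivAt_fderiv_apply_snd {f : ℝ × ℝ → E} {z : ℝ × ℝ} (hf : ContDiffAt ℝ 2 f z) :
    HasDerivAt (fun s => fderiv ℝ f (s, z.2) (0, 1)) (mixedDeriv f z) z.1 := by
  have second := ((hf.fderiv_right (m := 1) (by norm_num)).differentiableAt
    one_ne_zero).hasFDerivAt
  simpa [mixedDeriv] using (hasDerivAt_partials_of_hasFDerivAt second).1.clm_apply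
    (hasDerivAt_const z.1 ((0, 1) : ℝ × ℝ))

theorem mixedDeriv_eq_of_hasDerivAt {f v : ℝ × ℝ → E} {z : ℝ × ℝ} {h : E} (hf : ContDiff ℝ 2 f)
    (hv : ∀ x y, HasDerivAt (fun y' => f (x, y')) (v (x, y)) y)
    (hh : HasDerivAt (fun x => v (x, z.2)) h z.1) : mixedDeriv f z = h := by
  have fderiv_snd : ∀ x, fderiv ℝ f (x, z.2) (0, 1) = v (x, z.2) := fun x =>
    (hasDerivAt_partials_of_hasFDerivAt
      (hf.differentiable two_ne_zero (x, z.2)).hasFDerivAt).2.unique (hv x z.2)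
  have := hasDerivAt_fderiv_apply_snd hf.contDiffAt (z := z)
  simp only [fderiv_snd] at this
  exact this.unique hh

theorem mixedDeriv_sub {f g : ℝ × ℝ → E} {z : ℝ × ℝ} (hf : ContDiffAt ℝ 2 f z)
    (hg : ContDiffAt ℝ 2 g z) : mixedDeriv (f - g) z = mixedDeriv f z - mixedDeriv g z := by
  simpa [mixedDeriv, iteratedFDeriv_two_apply] using
    congrArg (fun D => D ![((1, 0) : ℝ × ℝ), ((0, 1) : ℝ × ℝ)]) (iteratedFDeriv_sub_apply hf hg)

theorem mixedDeriv_clm_comp (L : E →L[ℝ] G) {f : ℝ × ℝ → E} {z : ℝ × ℝ} (hf : ContDiffAt ℝ 2 f z) :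
    mixedDeriv (L ∘ f) z = L (mixedDeriv f z) := by
  have := L.iteratedFDeriv_comp_left hf (i := 2) le_rfl
  simpa [mixedDeriv, iteratedFDeriv_two_apply] using
    congrArg (fun D => D ![((1, 0) : ℝ × ℝ), ((0, 1) : ℝ × ℝ)]) this

theorem deriv_deriv_sub_deriv_deriv_eq_four_smul_mixedDeriv {f : ℝ × ℝ → E} {x y : ℝ}
    (hf : ContDiffAt ℝ 2 f (x + y, x - y)) :
    deriv (fun x' => deriv (fun x'' => f (x'' + y, x'' - y)) x') x
        - deriv (fun y' => deriv (fun y'' => f (x + y'', x - y'')) y') y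
      = (4 : ℝ) • mixedDeriv f (x + y, x - y) := by
  have dx := deriv_deriv_comp_line (f := f) (z := (y, -y)) (v := (1, 1)) (t := x)
    (by convert hf using 1; ext <;> simp [add_comm, sub_eq_add_neg])
  have dy := deriv_deriv_comp_line (f := f) (z := (x, x)) (v := (1, -1)) (t := y)
    (by convert hf using 1; ext <;> simp [sub_eq_add_neg])
  have symm := hf.isSymmSndFDerivAt (by simp) (0, 1) (1, 0)
  have e₁ : ((1 : ℝ), (1 : ℝ)) = (1, 0) + (0, 1) := by simp
  have e₂ : ((1 : ℝ), (-1 : ℝ)) = (1, 0) - (0, 1) := by simp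
  simp only [Prod.smul_mk, Prod.mk_add_mk, smul_eq_mul, mul_one, mul_neg, ← sub_eq_add_neg,
    add_comm y, neg_add_eq_sub] at dx dy
  rw [dx, dy, e₁, e₂]
  simp only [map_add, map_sub, add_apply, sub_apply, symm, mixedDeriv]
  module

end WaveOperator

section CharTriangle

/-- The triangle `Omega` in the characteristic coordinates `ξ = x + y`, `η = x - y`. -/
def charTriangle : Set (ℝ × ℝ) := {z | 0 ≤ z.2 ∧ z.2 ≤ z.1 ∧ z.1 + z.2 ≤ 2}

theorem rectangle_subset_charTriangle {z : ℝ × ℝ} (hz : z ∈ charTriangle) :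
    Icc z.2 z.1 ×ˢ Icc 0 z.2 ⊆ charTriangle :=
  fun _ hw => ⟨hw.2.1, hw.2.2.trans hw.1.1, (add_le_add hw.1.2 hw.2.2).trans hz.2.2⟩

theorem mul_le_one_of_mem_charTriangle {z : ℝ × ℝ} (hz : z ∈ charTriangle) : z.1 * z.2 ≤ 1 := by
  obtain ⟨h₀, h₁, h₂⟩ := hz
  nlinarith [sq_nonneg (z.1 - z.2)]

theorem mul_nonneg_of_mem_charTriangle {z : ℝ × ℝ} (hz : z ∈ charTriangle) : 0 ≤ z.1 * z.2 :=
  mul_nonneg (hz.1.trans hz.2.1) hz.1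

theorem convex_charTriangle : Convex ℝ charTriangle := by
  intro z hz w hw a b ha hb hab
  obtain ⟨hz₀, hz₁, hz₂⟩ := hz
  obtain ⟨hw₀, hw₁, hw₂⟩ := hw
  refine ⟨by simp only [Prod.snd_add, Prod.smul_snd, smul_eq_mul]; positivity, ?_, ?_⟩ <;>
    simp only [Prod.snd_add, Prod.smul_snd, Prod.fst_add, Prod.smul_fst, smul_eq_mul]
  · gcongr
  · nlinarith

theorem isCompact_charTriangle : IsCompact charTriangle := by
  have rectangle : IsCompact (Icc (0 : ℝ) 2 ×ˢ Icc (0 : ℝ) 1) := isCompact_Icc.prod isCompact_Icc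
  refine rectangle.of_isClosed_subset ?_ fun z ⟨h₀, h₁, h₂⟩ =>
    ⟨⟨h₀.trans h₁, by linarith⟩, h₀, by linarith⟩
  exact (isClosed_le continuous_const continuous_snd).inter
    ((isClosed_le continuous_snd continuous_fst).inter
      (isClosed_le (continuous_fst.add continuous_snd) continuous_const))

instance : CompactSpace charTriangle := isCompact_iff_compactSpace.1 isCompact_charTriangle

theorem charRetract_mem (z : ℝ × ℝ) :
    (max 0 (min 2 z.1), max 0 (min (min (max 0 (min 2 z.1)) (2 - max 0 (min 2 z.1))) z.2)) ∈
      charTriangle := by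
  set ξ := max 0 (min 2 z.1)
  have hξ : 0 ≤ min ξ (2 - ξ) := le_min (le_max_left _ _)
    (sub_nonneg.2 (max_le zero_le_two (min_le_left _ _)))
  have hη : max 0 (min (min ξ (2 - ξ)) z.2) ≤ min ξ (2 - ξ) := max_le hξ (min_le_left _ _)
  exact ⟨le_max_left _ _, hη.trans (min_le_left _ _), by linarith [hη.trans (min_le_right _ _)]⟩

/-- A continuous retraction of the plane onto the triangle, used to extend functions. -/
def charRetract : C(ℝ × ℝ, charTriangle) where
  toFun z :=
    ⟨(max 0 (min 2 z.1), max 0 (min (min (max 0 (min 2 z.1)) (2 - max 0 (min 2 z.1))) z.2)),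
      charRetract_mem z⟩
  continuous_toFun := by fun_prop

theorem charRetract_of_mem {z : ℝ × ℝ} (hz : z ∈ charTriangle) : charRetract z = ⟨z, hz⟩ := by
  obtain ⟨h₀, h₁, h₂⟩ := hz
  have hξ : max 0 (min 2 z.1) = z.1 := by
    rw [min_eq_right (by linarith), max_eq_right (h₀.trans h₁)]
  have hη : max 0 (min (min z.1 (2 - z.1)) z.2) = z.2 := by
    rw [min_eq_right (le_min h₁ (by linarith)), max_eq_right h₀]
  ext <;> simp only [charRetract, ContinuousMap.coe_mk, hξ, hη]

variable {E : Type*} [NormedAddCommGroup E]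

/-- The bounded extension to the plane of a function continuous on the triangle. -/
def triangleExtend (f : ℝ × ℝ → E) (hf : ContinuousOn f charTriangle) : ℝ × ℝ →ᵇ E :=
  (BoundedContinuousFunction.mkOfCompact
    ⟨charTriangle.domRestrict f, hf.domRestrict⟩).compContinuous charRetract

theorem triangleExtend_apply {f : ℝ × ℝ → E} (hf : ContinuousOn f charTriangle) (z : ℝ × ℝ) :
    triangleExtend f hf z = f (charRetract z) := rfl

theorem triangleExtend_apply_of_mem {f : ℝ × ℝ → E} (hf : ContinuousOn f charTriangle) {z : ℝ × ℝ}
    (hz : z ∈ charTriangle) : triangleExtend f hf z = f z := by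
  rw [triangleExtend_apply, charRetract_of_mem hz]

theorem norm_triangleExtend_le {f : ℝ × ℝ → E} (hf : ContinuousOn f charTriangle) {M : ℝ}
    (hM : 0 ≤ M) (hfM : ∀ z ∈ charTriangle, ‖f z‖ ≤ M) : ‖triangleExtend f hf‖ ≤ M :=
  (BoundedContinuousFunction.norm_le hM).2 fun z => hfM _ (charRetract z).2

end CharTriangle

section Goursat

variable {E : Type*} [NormedAddCommGroup E] [NormedSpace ℝ E]

/-- The integral of `F` over the rectangle `[η, ξ] × [0, η]`, where `z = (ξ, η)`. -/
noncomputable def charIntegral (F : ℝ × ℝ → E) (z : ℝ × ℝ) : E :=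
  ∫ τ in (0 : ℝ)..z.2, ∫ s in z.2..z.1, F (s, τ)

/-- The integral of `F` over the segment `[η, ξ]` of the axis, where `z = (ξ, η)`. -/
noncomputable def edgeIntegral (F : ℝ × ℝ → E) (z : ℝ × ℝ) : E :=
  ∫ s in z.2..z.1, F (s, 0)

theorem norm_charIntegral_le {F : ℝ × ℝ → E} {K : ℝ} {m : ℕ}
    (hF : ∀ w ∈ charTriangle, ‖F w‖ ≤ K * (w.1 * w.2) ^ m) {z : ℝ × ℝ} (hz : z ∈ charTriangle) :
    ‖charIntegral F z‖ ≤ K * (z.1 * z.2) ^ (m + 1) / (m + 1) ^ 2 := by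
  have hK : 0 ≤ K := by
    have := (norm_nonneg _).trans (hF (1, 1) ⟨zero_le_one, le_rfl, by norm_num⟩)
    simpa using this
  have power_integral : ∀ a b : ℝ, ∫ s in a..b, s ^ m = (b ^ (m + 1) - a ^ (m + 1)) / (m + 1) :=
    fun _ _ => integral_pow m
  have inner : ∀ τ ∈ Icc 0 z.2, ‖∫ s in z.2..z.1, F (s, τ)‖
      ≤ K * (z.1 ^ (m + 1) / (m + 1)) * τ ^ m := fun τ hτ => by
    calc ‖∫ s in z.2..z.1, F (s, τ)‖ ≤ ∫ s in z.2..z.1, K * τ ^ m * s ^ m := by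
          refine norm_integral_le_of_norm_le hz.2.1 (.of_forall fun s hs => ?_)
            (Continuous.intervalIntegrable (by fun_prop) _ _)
          have hw : (s, τ) ∈ charTriangle :=
            rectangle_subset_charTriangle hz ⟨Ioc_subset_Icc_self hs, hτ⟩
          refine (hF (s, τ) hw).trans_eq ?_
          rw [mul_pow, mul_assoc, mul_comm (τ ^ m)]
      _ = K * τ ^ m * ((z.1 ^ (m + 1) - z.2 ^ (m + 1)) / (m + 1)) := by
          rw [integral_const_mul, power_integral]
      _ ≤ K * τ ^ m * (z.1 ^ (m + 1) / (m + 1)) := by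
          have := pow_nonneg hz.1 (m + 1)
          have := pow_nonneg hτ.1 m
          gcongr; linarith
      _ = K * (z.1 ^ (m + 1) / (m + 1)) * τ ^ m := by ring
  calc ‖charIntegral F z‖ ≤ ∫ τ in (0 : ℝ)..z.2, K * (z.1 ^ (m + 1) / (m + 1)) * τ ^ m :=
        norm_integral_le_of_norm_le hz.1
          (.of_forall fun τ hτ => inner τ (Ioc_subset_Icc_self hτ))
          (Continuous.intervalIntegrable (by fun_prop) _ _)
    _ = K * (z.1 * z.2) ^ (m + 1) / (m + 1) ^ 2 := by
        rw [integral_const_mul, power_integral, zero_pow m.succ_ne_zero, sub_zero, mul_pow]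
        field_simp

theorem norm_edgeIntegral_le {F : ℝ × ℝ → E} {K : ℝ} (hF : ∀ w, ‖F w‖ ≤ K) {z : ℝ × ℝ}
    (hz : z ∈ charTriangle) : ‖edgeIntegral F z‖ ≤ 2 * K := by
  have hK : 0 ≤ K := (norm_nonneg _).trans (hF z)
  calc ‖edgeIntegral F z‖ ≤ K * |z.1 - z.2| :=
        norm_integral_le_of_norm_le_const fun s _ => hF (s, 0)
    _ ≤ 2 * K := by
      rw [abs_of_nonneg (sub_nonneg.2 hz.2.1), mul_comm]
      gcongr
      linarith [hz.1, hz.2.2]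

theorem charIntegral_add {F G : ℝ × ℝ → E} (hF : Continuous F) (hG : Continuous G) (z : ℝ × ℝ) :
    charIntegral (F + G) z = charIntegral F z + charIntegral G z := by
  have slice : ∀ {H : ℝ × ℝ → E}, Continuous H → ∀ τ,
      IntervalIntegrable (fun s => H (s, τ)) MeasureTheory.volume z.2 z.1 := fun hH τ =>
    (hH.comp (Continuous.prodMk_left τ)).intervalIntegrable _ _
  have inner : ∀ {H : ℝ × ℝ → E}, Continuous H →
      IntervalIntegrable (fun τ => ∫ s in z.2..z.1, H (s, τ)) MeasureTheory.volume 0 z.2 :=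
    fun hH => (continuous_parametric_intervalIntegral_of_continuous' (by fun_prop)
      _ _).intervalIntegrable _ _
  simp only [charIntegral, Pi.add_apply, integral_add (slice hF _) (slice hG _),
    integral_add (inner hF) (inner hG)]

theorem charIntegral_eq_doublePrimitive {F : ℝ × ℝ → E} (hF : Continuous F) (z : ℝ × ℝ) :
    charIntegral F z = doublePrimitive F z - doublePrimitive F (z.2, z.2) := by
  have slice : ∀ τ a b, IntervalIntegrable (fun s => F (s, τ)) MeasureTheory.volume a b :=
    fun τ a b => (hF.comp (Continuous.prodMk_left τ)).intervalIntegrable a b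
  have prim : ∀ x, Continuous fun τ => ∫ s in (0 : ℝ)..x, F (s, τ) := fun x =>
    (continuous_primitive_fst hF).comp (Continuous.prodMk_right x)
  rw [charIntegral, doublePrimitive, doublePrimitive,
    ← integral_sub ((prim _).intervalIntegrable _ _) ((prim _).intervalIntegrable _ _)]
  simp only [integral_interval_sub_left (slice _ _ _) (slice _ _ _)]

theorem edgeIntegral_eq_primitive {F : ℝ × ℝ → E} (hF : Continuous F) (z : ℝ × ℝ) :
    edgeIntegral F z = (∫ s in (0 : ℝ)..z.1, F (s, 0)) - ∫ s in (0 : ℝ)..z.2, F (s, 0) :=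
  have slice := hF.comp (Continuous.prodMk_left (0 : ℝ))
  (integral_interval_sub_left (slice.intervalIntegrable _ _) (slice.intervalIntegrable _ _)).symm

variable [CompleteSpace E]

theorem contDiff_charIntegral {F : ℝ × ℝ → E} {n : ℕ} (hF : ContDiff ℝ n F) :
    ContDiff ℝ (n + 1) (charIntegral F) := by
  rw [funext (charIntegral_eq_doublePrimitive hF.continuous)]
  exact (contDiff_doublePrimitive hF).sub
    ((contDiff_doublePrimitive hF).comp (contDiff_snd.prodMk contDiff_snd))

theorem contDiff_edgeIntegral {F : ℝ × ℝ → E} {n : ℕ} (hF : ContDiff ℝ n F) :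
    ContDiff ℝ (n + 1) (edgeIntegral F) := by
  have prim := contDiff_primitive (hF.comp (contDiff_id.prodMk contDiff_const :
    ContDiff ℝ n fun s : ℝ => (s, (0 : ℝ))))
  rw [funext (edgeIntegral_eq_primitive hF.continuous)]
  exact (prim.comp contDiff_fst).sub (prim.comp contDiff_snd)

theorem continuous_charIntegral {F : ℝ × ℝ → E} (hF : Continuous F) :
    Continuous (charIntegral F) :=
  (contDiff_charIntegral (n := 0) (contDiff_zero.2 hF)).continuous

theorem continuous_edgeIntegral {F : ℝ × ℝ → E} (hF : Continuous F) :
    Continuous (edgeIntegral F) :=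
  (contDiff_edgeIntegral (n := 0) (contDiff_zero.2 hF)).continuous

theorem mixedDeriv_add_smul_doublePrimitive {φ ψ : ℝ → E} {F : ℝ × ℝ → E} (hφ : ContDiff ℝ 2 φ)
    (hψ : ContDiff ℝ 2 ψ) (hF : ContDiff ℝ 1 F) (b : ℝ) (z : ℝ × ℝ) :
    mixedDeriv (fun w => φ w.1 + ψ w.2 + b • doublePrimitive F w) z = b • F z := by
  refine mixedDeriv_eq_of_hasDerivAt
    (v := fun w => deriv ψ w.2 + b • ∫ s in (0 : ℝ)..w.1, F (s, w.2)) ?_ (fun x y => ?_) ?_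
  · exact ((hφ.comp contDiff_fst).add (hψ.comp contDiff_snd)).add
      ((contDiff_doublePrimitive (n := 1) hF).const_smul b)
  · exact ((hψ.differentiable two_ne_zero y).hasDerivAt.const_add (φ x)).add
      ((hasDerivAt_doublePrimitive_snd hF.continuous x y).const_smul b)
  · exact ((hasDerivAt_primitive_fst hF.continuous z.1 z.2).const_smul b).const_add (deriv ψ z.2)

theorem mixedDeriv_edgeIntegral_add_charIntegral {F G : ℝ × ℝ → E} (hF : ContDiff ℝ 1 F)
    (hG : ContDiff ℝ 1 G) (a b : ℝ) (z : ℝ × ℝ) :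
    mixedDeriv (fun w => a • edgeIntegral F w + b • charIntegral G w) z = b • G z := by
  have prim : ContDiff ℝ 2 fun x : ℝ => ∫ s in (0 : ℝ)..x, F (s, 0) :=
    contDiff_primitive (n := 1) (hF.comp (contDiff_id.prodMk contDiff_const))
  have diagonal : ContDiff ℝ 2 fun y : ℝ => doublePrimitive G (y, y) :=
    (contDiff_doublePrimitive (n := 1) hG).comp (contDiff_id.prodMk contDiff_id)
  rw [← mixedDeriv_add_smul_doublePrimitive (prim.const_smul a)
    ((prim.const_smul (-a)).sub (diagonal.const_smul b)) hG b z]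
  congr 1 with w
  rw [edgeIntegral_eq_primitive hF.continuous, charIntegral_eq_doublePrimitive hG.continuous]
  module

end Goursat

section GoursatOperators

/-- `charIntegral`, followed by the extension from the triangle, on bounded continuous functions. -/
noncomputable def charIntegralCLM : (ℝ × ℝ →ᵇ ℂ) →L[ℂ] ℝ × ℝ →ᵇ ℂ :=
  LinearMap.mkContinuous
    { toFun := fun F =>
        triangleExtend (charIntegral F) (continuous_charIntegral F.continuous).continuousOn
      map_add' := fun F G => by
        ext z
        exact charIntegral_add F.continuous G.continuous _
      map_smul' := fun c F => by
        ext z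
        simp [triangleExtend_apply, charIntegral] }
    1 fun F => by
      refine norm_triangleExtend_le (continuous_charIntegral F.continuous).continuousOn
        (by positivity) fun z hz => ?_
      have bound := norm_charIntegral_le (m := 0)
        (fun w _ => by simpa using F.norm_coe_le_norm w) hz
      simp only [zero_add, pow_one, CharP.cast_eq_zero, one_pow, div_one] at bound
      rw [one_mul]
      exact bound.trans (mul_le_of_le_one_right (norm_nonneg F) (mul_le_one_of_mem_charTriangle hz))

/-- `edgeIntegral`, followed by the extension from the triangle, on bounded continuous functions. -/
noncomputable def edgeIntegralCLM : (ℝ × ℝ →ᵇ ℂ) →L[ℂ] ℝ × ℝ →ᵇ ℂ :=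
  LinearMap.mkContinuous
    { toFun := fun F =>
        triangleExtend (edgeIntegral F) (continuous_edgeIntegral F.continuous).continuousOn
      map_add' := fun F G => by
        ext z
        have slice : ∀ H : ℝ × ℝ →ᵇ ℂ, Continuous fun s : ℝ => H (s, 0) := fun H => by fun_prop
        exact integral_add ((slice F).intervalIntegrable _ _) ((slice G).intervalIntegrable _ _)
      map_smul' := fun c F => by
        ext z
        exact integral_const_mul c _ }
    2 fun F => norm_triangleExtend_le (continuous_edgeIntegral F.continuous).continuousOn
      (by positivity) fun z hz => norm_edgeIntegral_le F.norm_coe_le_norm hz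

theorem charIntegralCLM_apply_of_mem (F : ℝ × ℝ →ᵇ ℂ) {z : ℝ × ℝ} (hz : z ∈ charTriangle) :
    charIntegralCLM F z = charIntegral F z :=
  triangleExtend_apply_of_mem (continuous_charIntegral F.continuous).continuousOn hz

theorem edgeIntegralCLM_apply_of_mem (F : ℝ × ℝ →ᵇ ℂ) {z : ℝ × ℝ} (hz : z ∈ charTriangle) :
    edgeIntegralCLM F z = edgeIntegral F z :=
  triangleExtend_apply_of_mem (continuous_edgeIntegral F.continuous).continuousOn hz

end GoursatOperators

section CauchyEstimate

theorem div_succ_pow_le_three (m : ℕ) : (((m : ℝ) + 2) / (m + 1)) ^ (m + 1) ≤ 3 := by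
  have base : ((m : ℝ) + 2) / (m + 1) ≤ Real.exp (1 / (m + 1)) := by
    refine le_of_eq_of_le ?_ (Real.add_one_le_exp _)
    field_simp
    ring
  calc (((m : ℝ) + 2) / (m + 1)) ^ (m + 1) ≤ Real.exp (1 / (m + 1)) ^ (m + 1) := by gcongr
    _ = Real.exp 1 := by
      rw [← Real.exp_nat_mul]
      push_cast
      field_simp
    _ ≤ 3 := Real.exp_one_lt_three.le

theorem norm_deriv_le_of_norm_le_div_pow {F : Type*} [NormedAddCommGroup F] [NormedSpace ℂ F]
    {g : ℂ → F} {R K : ℝ} {m : ℕ} (hg : DifferentiableOn ℂ g (Metric.ball 0 R))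
    (hK : ∀ w ∈ Metric.ball 0 R, ‖g w‖ ≤ K / (R - ‖w‖) ^ m) {w : ℂ} (hw : w ∈ Metric.ball 0 R) :
    ‖deriv g w‖ ≤ 3 * K * (m + 1) / (R - ‖w‖) ^ (m + 1) := by
  set d := R - ‖w‖
  have hd₀ : 0 < d := sub_pos.2 (mem_ball_zero_iff.1 hw)
  have hK₀ : 0 ≤ K := by
    have := (norm_nonneg _).trans (hK w hw)
    rwa [le_div_iff₀ (by positivity), zero_mul] at this
  have hr : 0 < d / (m + 2) := by positivity
  have far : ∀ v ∈ Metric.closedBall w (d / (m + 2)), d * ((m + 1) / (m + 2)) ≤ R - ‖v‖ :=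
    fun v hv => by
      have split : d * ((m + 1) / (m + 2)) = d - d / (m + 2) := by field_simp; ring
      linarith [norm_sub_norm_le v w, mem_closedBall_iff_norm.1 hv]
  have inside : Metric.closedBall w (d / (m + 2)) ⊆ Metric.ball 0 R := fun v hv =>
    mem_ball_zero_iff.2 (sub_pos.1 (lt_of_lt_of_le (by positivity) (far v hv)))
  have circle : ∀ v ∈ Metric.sphere w (d / (m + 2)), ‖g v‖ ≤ K / (d * ((m + 1) / (m + 2))) ^ m :=
    fun v hv => by
      have hv' := Metric.sphere_subset_closedBall hv
      exact (hK v (inside hv')).trans (by gcongr; exact far v hv')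
  calc ‖deriv g w‖ ≤ K / (d * ((m + 1) / (m + 2))) ^ m / (d / (m + 2)) :=
        Complex.norm_deriv_le_of_forall_mem_sphere_norm_le hr
          (hg.diffContOnCl_ball inside) circle
    _ = K * (m + 1) / d ^ (m + 1) * (((m : ℝ) + 2) / (m + 1)) ^ (m + 1) := by
        simp only [mul_pow, div_pow]
        field_simp
        ring
    _ ≤ K * (m + 1) / d ^ (m + 1) * 3 := by gcongr; exact div_succ_pow_le_three m
    _ = 3 * K * (m + 1) / d ^ (m + 1) := by ring

theorem norm_mul_add_mul_deriv_le {g : ℂ → ℂ} {R K C : ℝ} {m : ℕ} (hR : R ≤ 1)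
    (hg : DifferentiableOn ℂ g (Metric.ball 0 R))
    (hK : ∀ w ∈ Metric.ball 0 R, ‖g w‖ ≤ K / (R - ‖w‖) ^ m) {w l : ℂ} (p : ℂ)
    (hw : w ∈ Metric.ball 0 R) (hl : ‖l‖ ≤ C) :
    ‖l * g w + p * deriv g w‖ ≤ (C + 3 * ‖p‖) * K * (m + 1) / (R - ‖w‖) ^ (m + 1) := by
  have hd₀ : 0 < R - ‖w‖ := sub_pos.2 (mem_ball_zero_iff.1 hw)
  have hd₁ : R - ‖w‖ ≤ m + 1 := by linarith [norm_nonneg w, (Nat.cast_nonneg m : (0 : ℝ) ≤ m)]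
  have hC : 0 ≤ C := (norm_nonneg l).trans hl
  have hK₀ : 0 ≤ K / (R - ‖w‖) ^ m := (norm_nonneg _).trans (hK w hw)
  have weaken : K / (R - ‖w‖) ^ m ≤ K * (m + 1) / (R - ‖w‖) ^ (m + 1) :=
    calc K / (R - ‖w‖) ^ m ≤ K / (R - ‖w‖) ^ m * ((m + 1) / (R - ‖w‖)) :=
          le_mul_of_one_le_right hK₀ ((one_le_div hd₀).2 hd₁)
      _ = K * (m + 1) / (R - ‖w‖) ^ (m + 1) := by rw [pow_succ]; field_simp
  calc ‖l * g w + p * deriv g w‖ ≤ ‖l‖ * ‖g w‖ + ‖p‖ * ‖deriv g w‖ := by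
        simpa only [norm_mul] using norm_add_le (l * g w) (p * deriv g w)
    _ ≤ C * (K * (m + 1) / (R - ‖w‖) ^ (m + 1))
          + ‖p‖ * (3 * K * (m + 1) / (R - ‖w‖) ^ (m + 1)) := by
        gcongr
        · exact (hK w hw).trans weaken
        · exact norm_deriv_le_of_norm_le_div_pow hg hK hw
    _ = (C + 3 * ‖p‖) * K * (m + 1) / (R - ‖w‖) ^ (m + 1) := by ring

end CauchyEstimate

theorem hasDerivAt_boundedContinuousFunction_apply {α : Type*} [TopologicalSpace α]
    {V : ℂ → α →ᵇ ℂ} {V' : α →ᵇ ℂ} {ζ : ℂ} (hV : HasDerivAt V V' ζ) (a : α) :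
    HasDerivAt (fun ζ => V ζ a) (V' a) ζ :=
  (BoundedContinuousFunction.evalCLM (β := ℂ) ℂ a).hasFDerivAt.comp_hasDerivAt ζ hV

section Dominants

variable {Λ : ℂ → ℝ × ℝ →ᵇ ℂ} {p : ℂ} {R C : ℝ}

/-- The successive approximations of the solution of
`4 V = -edgeIntegral Λ + charIntegral (Λ V + p V')`, whose sum is that solution. -/
noncomputable def goursatTerm (Λ : ℂ → ℝ × ℝ →ᵇ ℂ) (p : ℂ) : ℕ → ℂ → ℝ × ℝ →ᵇ ℂ
  | 0, ζ => -(4⁻¹ : ℂ) • edgeIntegralCLM (Λ ζ)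
  | m + 1, ζ => (4⁻¹ : ℂ) •
      charIntegralCLM (Λ ζ * goursatTerm Λ p m ζ + p • deriv (goursatTerm Λ p m) ζ)

theorem differentiableOn_goursatTerm (hΛ : DifferentiableOn ℂ Λ (Metric.ball 0 R)) (m : ℕ) :
    DifferentiableOn ℂ (goursatTerm Λ p m) (Metric.ball 0 R) := by
  induction m with
  | zero => exact (edgeIntegralCLM.differentiable.comp_differentiableOn hΛ).const_smul (-(4⁻¹ : ℂ))
  | succ m ih =>
    exact (charIntegralCLM.differentiable.comp_differentiableOn
      ((hΛ.mul ih).add ((ih.deriv Metric.isOpen_ball).const_smul p))).const_smul (4⁻¹ : ℂ)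

theorem goursatTerm_zero_apply (ζ : ℂ) {z : ℝ × ℝ} (hz : z ∈ charTriangle) :
    goursatTerm Λ p 0 ζ z = -(4⁻¹ : ℂ) * edgeIntegral (Λ ζ) z := by
  rw [← edgeIntegralCLM_apply_of_mem _ hz]
  rfl

theorem goursatTerm_succ_apply (m : ℕ) (ζ : ℂ) {z : ℝ × ℝ} (hz : z ∈ charTriangle) :
    goursatTerm Λ p (m + 1) ζ z = (4⁻¹ : ℂ) *
      charIntegral (Λ ζ * goursatTerm Λ p m ζ + p • deriv (goursatTerm Λ p m) ζ) z := by
  rw [← charIntegralCLM_apply_of_mem _ hz]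
  rfl

/- Each step loses a time derivative, which Cauchy's estimate turns into a factor `m + 1`; the two
integrations gain `(m + 1)⁻²`. -/
theorem norm_goursatTerm_apply_le (hR : R ≤ 1) (hΛ : DifferentiableOn ℂ Λ (Metric.ball 0 R))
    (hC : ∀ ζ ∈ Metric.ball 0 R, ‖Λ ζ‖ ≤ C) (m : ℕ) {ζ : ℂ} (hζ : ζ ∈ Metric.ball 0 R)
    {z : ℝ × ℝ} (hz : z ∈ charTriangle) :
    ‖goursatTerm Λ p m ζ z‖
      ≤ C * ((C + 3 * ‖p‖) * (z.1 * z.2)) ^ m / m.factorial / (R - ‖ζ‖) ^ m := by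
  have hC₀ : 0 ≤ C := (norm_nonneg _).trans (hC ζ hζ)
  induction m generalizing ζ z with
  | zero =>
    have edge := norm_edgeIntegral_le (fun w => ((Λ ζ).norm_coe_le_norm w).trans (hC ζ hζ)) hz
    rw [goursatTerm_zero_apply ζ hz, norm_mul, norm_neg, norm_inv, Complex.norm_ofNat]
    simp only [pow_zero, mul_one, Nat.factorial_zero, Nat.cast_one, div_one]
    linarith
  | succ m ih =>
    set d := R - ‖ζ‖
    have hd₀ : 0 < d := sub_pos.2 (mem_ball_zero_iff.1 hζ)
    set F := Λ ζ * goursatTerm Λ p m ζ + p • deriv (goursatTerm Λ p m) ζ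
    have source : ∀ w ∈ charTriangle, ‖F w‖
        ≤ C * (C + 3 * ‖p‖) ^ (m + 1) * (m + 1) / m.factorial / d ^ (m + 1)
          * (w.1 * w.2) ^ m := fun w hw => by
      have diff := differentiableOn_goursatTerm (p := p) hΛ m
      have at_w : ∀ v ∈ Metric.ball (0 : ℂ) R,
          HasDerivAt (fun v => goursatTerm Λ p m v w) (deriv (goursatTerm Λ p m) v w) v :=
        fun v hv => hasDerivAt_boundedContinuousFunction_apply
          (diff.differentiableAt (Metric.isOpen_ball.mem_nhds hv)).hasDerivAt w
      have bound := norm_mul_add_mul_deriv_le hR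
        (fun v hv => (at_w v hv).differentiableAt.differentiableWithinAt)
        (fun v hv => ih hv hw) p hζ (((Λ ζ).norm_coe_le_norm w).trans (hC ζ hζ))
      rw [(at_w ζ hζ).deriv] at bound
      refine bound.trans_eq ?_
      rw [mul_pow]
      ring
    have bound := norm_charIntegral_le source hz
    rw [goursatTerm_succ_apply m ζ hz, norm_mul, norm_inv, Complex.norm_ofNat]
    refine (mul_le_of_le_one_left (norm_nonneg _) (by norm_num)).trans (bound.trans_eq ?_)
    rw [Nat.factorial_succ, mul_pow _ (z.1 * z.2)]
    push_cast
    field_simp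

theorem goursatTerm_apply_charRetract (m : ℕ) (ζ : ℂ) (z : ℝ × ℝ) :
    goursatTerm Λ p m ζ z = goursatTerm Λ p m ζ (charRetract z) := by
  cases m <;> simp [goursatTerm, charIntegralCLM, edgeIntegralCLM, triangleExtend_apply,
    charRetract_of_mem (charRetract z).2]

theorem norm_goursatTerm_le (hR : R ≤ 1) (hΛ : DifferentiableOn ℂ Λ (Metric.ball 0 R))
    (hC : ∀ ζ ∈ Metric.ball 0 R, ‖Λ ζ‖ ≤ C) (m : ℕ) {r : ℝ} (hr : r < R) {ζ : ℂ}
    (hζ : ζ ∈ Metric.ball 0 r) :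
    ‖goursatTerm Λ p m ζ‖ ≤ C * (((C + 3 * ‖p‖) / (R - r)) ^ m / m.factorial) := by
  have : 0 < R - r := sub_pos.2 hr
  have hζR : ζ ∈ Metric.ball 0 R := Metric.ball_subset_ball hr.le hζ
  have hC₀ : 0 ≤ C := (norm_nonneg _).trans (hC ζ hζR)
  have on_triangle : ∀ z ∈ charTriangle,
      ‖goursatTerm Λ p m ζ z‖ ≤ C * (((C + 3 * ‖p‖) / (R - r)) ^ m / m.factorial) := fun z hz => by
    refine (norm_goursatTerm_apply_le hR hΛ hC m hζR hz).trans ?_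
    rw [div_pow, mul_pow, mul_div_assoc, mul_div_assoc, div_right_comm]
    have h₁ := pow_le_one₀ (n := m) (mul_nonneg_of_mem_charTriangle hz)
      (mul_le_one_of_mem_charTriangle hz)
    have h₂ : R - r ≤ R - ‖ζ‖ := by linarith [mem_ball_zero_iff.1 hζ]
    gcongr
    exact mul_le_of_le_one_right (by positivity) h₁
  refine (BoundedContinuousFunction.norm_le (by positivity)).2 fun z => ?_
  rw [goursatTerm_apply_charRetract]
  exact on_triangle _ (charRetract z).2

theorem exists_solution_of_goursat_equation (hR : R ≤ 1) (p : ℂ)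
    (hΛ : DifferentiableOn ℂ Λ (Metric.ball 0 R)) (hC : ∀ ζ ∈ Metric.ball 0 R, ‖Λ ζ‖ ≤ C) :
    ∃ V : ℂ → ℝ × ℝ →ᵇ ℂ, DifferentiableOn ℂ V (Metric.ball 0 R) ∧ ∀ ζ ∈ Metric.ball 0 R,
      V ζ = -(4⁻¹ : ℂ) • edgeIntegralCLM (Λ ζ)
        + (4⁻¹ : ℂ) • charIntegralCLM (Λ ζ * V ζ + p • deriv V ζ) := by
  have local_bound := fun m => @norm_goursatTerm_le Λ p R C hR hΛ hC m
  have summable_bound : ∀ r, Summable fun m : ℕ =>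
      C * (((C + 3 * ‖p‖) / (R - r)) ^ m / m.factorial) := fun r =>
    (Real.summable_pow_div_factorial _).mul_left C
  have diff := differentiableOn_goursatTerm (p := p) hΛ
  have exhaust : ∀ ζ ∈ Metric.ball (0 : ℂ) R, ∃ r < R, ζ ∈ Metric.ball (0 : ℂ) r := fun ζ hζ => by
    simpa [and_comm] using exists_between (mem_ball_zero_iff.1 hζ)
  refine ⟨fun ζ => ∑' m, goursatTerm Λ p m ζ, fun ζ hζ => ?_, fun ζ hζ => ?_⟩ <;>
    obtain ⟨r, hr, hζr⟩ := exhaust ζ hζ <;>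
    have sub := Metric.ball_subset_ball (x := (0 : ℂ)) hr.le
  · have diff_sum := Complex.differentiableOn_tsum_of_summable_norm (summable_bound r)
      (fun m => (diff m).mono sub) Metric.isOpen_ball fun m w hw => local_bound m hr hw
    exact (diff_sum.differentiableAt (Metric.isOpen_ball.mem_nhds hζr)).differentiableWithinAt
  · have sum : HasSum (fun m => goursatTerm Λ p m ζ) (∑' m, goursatTerm Λ p m ζ) :=
      (Summable.of_norm_bounded (summable_bound r) fun m => local_bound m hr hζr).hasSum
    have sum_deriv := Complex.hasSum_deriv_of_summable_norm (summable_bound r)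
      (fun m => (diff m).mono sub) Metric.isOpen_ball (fun m w hw => local_bound m hr hw) hζr
    have source := (sum.mul_left (Λ ζ)).add (sum_deriv.const_smul p)
    refine sum.unique ((hasSum_nat_add_iff' 1).1 ?_)
    rw [Finset.sum_range_one, goursatTerm, add_sub_cancel_left]
    exact (charIntegralCLM.hasSum source).const_smul (4⁻¹ : ℂ)

end Dominants

section PowerSeries

theorem summable_mul_pow_of_abs_le {a : ℕ → ℝ} {C t : ℝ} (ha : ∀ n, |a n| ≤ C)
    (ht : t ∈ Ico (0 : ℝ) 1) : Summable fun n => a n * t ^ n := by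
  refine .of_norm_bounded ((summable_geometric_of_lt_one ht.1 ht.2).mul_left C) fun n => ?_
  rw [norm_mul, norm_pow, Real.norm_eq_abs, Real.norm_of_nonneg ht.1]
  exact mul_le_mul_of_nonneg_right (ha n) (pow_nonneg ht.1 n)

theorem abs_tsum_mul_pow_le {a : ℕ → ℝ} {C t : ℝ} (ha : ∀ n, |a n| ≤ C)
    (ht : t ∈ Ico (0 : ℝ) 1) : |∑' n, a n * t ^ n| ≤ C * (1 - t)⁻¹ := by
  refine tsum_of_norm_bounded (f := fun n => a n * t ^ n)
    ((hasSum_geometric_of_lt_one ht.1 ht.2).mul_left C) fun n => ?_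
  rw [norm_mul, norm_pow, Real.norm_eq_abs, Real.norm_of_nonneg ht.1]
  exact mul_le_mul_of_nonneg_right (ha n) (pow_nonneg ht.1 n)

theorem tsum_mul_pow_eq_add_mul_tsum {a : ℕ → ℝ} {C t : ℝ} (ha : ∀ n, |a n| ≤ C)
    (ht : t ∈ Ico (0 : ℝ) 1) :
    ∑' n, a n * t ^ n = a 0 + t * ∑' n, a (n + 1) * t ^ n := by
  rw [(summable_mul_pow_of_abs_le ha ht).tsum_eq_zero_add, ← tsum_mul_left, pow_zero, mul_one]
  exact congrArg _ (tsum_congr fun n => by ring)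

variable {α : Type*} [TopologicalSpace α] {S : Set α} {C : ℝ}

theorem continuousOn_constantCoeff_of_continuousOn_tsum {c : ℕ → α → ℝ}
    (hc : ∀ n, ∀ a ∈ S, |c n a| ≤ C)
    (hcont : ∀ t ∈ Ioo (0 : ℝ) 1, ContinuousOn (fun a => ∑' n, c n a * t ^ n) S) :
    ContinuousOn (c 0) S := by
  have unit_interval : Ioo (0 : ℝ) 1 ∈ nhdsWithin 0 (Ioi 0) := Ioo_mem_nhdsGT one_pos
  have remainder : Filter.Tendsto (fun t : ℝ => t * (C * (1 - t)⁻¹)) (nhdsWithin 0 (Ioi 0))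
      (nhds 0) := by
    have : ContinuousAt (fun t : ℝ => t * (C * (1 - t)⁻¹)) 0 := by
      have : (1 : ℝ) - 0 ≠ 0 := by norm_num
      fun_prop (disch := assumption)
    simpa using this.tendsto.mono_left nhdsWithin_le_nhds
  have uniform : TendstoUniformlyOn (fun t a => ∑' n, c n a * t ^ n) (c 0)
      (nhdsWithin (0 : ℝ) (Ioi 0)) S := by
    refine Metric.tendstoUniformlyOn_iff.2 fun ε hε => ?_
    filter_upwards [remainder.eventually_lt_const hε, unit_interval] with t small ht a ha
    have ht' := Ioo_subset_Ico_self ht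
    rw [tsum_mul_pow_eq_add_mul_tsum (hc · a ha) ht', dist_comm, Real.dist_eq,
      add_sub_cancel_left, abs_mul, abs_of_pos ht.1]
    exact (mul_le_mul_of_nonneg_left (abs_tsum_mul_pow_le (fun n => hc (n + 1) a ha) ht')
      ht.1.le).trans_lt small
  exact uniform.continuousOn (Filter.Eventually.frequently
    (Filter.mem_of_superset unit_interval hcont))

theorem continuousOn_coeff_of_continuousOn_tsum {c : ℕ → α → ℝ} (hc : ∀ n, ∀ a ∈ S, |c n a| ≤ C)
    (hcont : ∀ t ∈ Ioo (0 : ℝ) 1, ContinuousOn (fun a => ∑' n, c n a * t ^ n) S) (n : ℕ) :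
    ContinuousOn (c n) S := by
  induction n generalizing c with
  | zero => exact continuousOn_constantCoeff_of_continuousOn_tsum hc hcont
  | succ _ ih =>
    refine ih (c := fun n => c (n + 1)) (fun n => hc (n + 1)) fun t ht => ?_
    have first := continuousOn_constantCoeff_of_continuousOn_tsum hc hcont
    refine (((hcont t ht).sub first).div_const t).congr fun a ha => ?_
    simp only [Pi.sub_apply]
    rw [tsum_mul_pow_eq_add_mul_tsum (hc · a ha) (Ioo_subset_Ico_self ht), add_sub_cancel_left,
      mul_div_cancel_left₀ _ ht.1.ne']

theorem norm_pow_smul_le {F : Type*} [NormedAddCommGroup F] [NormedSpace ℂ F] {c : ℕ → F}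
    (hc : ∀ n, ‖c n‖ ≤ C) {R : ℝ} {ζ : ℂ} (hζ : ζ ∈ Metric.ball 0 R) (n : ℕ) :
    ‖ζ ^ n • c n‖ ≤ R ^ n * C := by
  rw [norm_smul, norm_pow]
  have := (mem_ball_zero_iff.1 hζ).le
  exact mul_le_mul (by gcongr) (hc n) (norm_nonneg _)
    (pow_nonneg ((norm_nonneg ζ).trans this) n)

/-- On `S` and for times in `[0, 1)`, the function `g` is a power series in time whose coefficients
are uniformly bounded continuous functions on the whole space. -/
def HasBoundedTimeSeries (g : ℝ → α → ℂ) (S : Set α) : Prop :=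
  ∃ (c : ℕ → α →ᵇ ℂ) (C : ℝ), (∀ n, ‖c n‖ ≤ C) ∧
    ∀ t ∈ Ico (0 : ℝ) 1, ∀ a ∈ S, HasSum (fun n => (t : ℂ) ^ n * c n a) (g t a)

namespace HasBoundedTimeSeries

variable {g h : ℝ → α → ℂ}

theorem sub (hg : HasBoundedTimeSeries g S) (hh : HasBoundedTimeSeries h S) :
    HasBoundedTimeSeries (g - h) S := by
  obtain ⟨c, C, hc, hcg⟩ := hg
  obtain ⟨d, D, hd, hdh⟩ := hh
  refine ⟨c - d, C + D, fun n => (norm_sub_le _ _).trans (add_le_add (hc n) (hd n)),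
    fun t ht a ha => ?_⟩
  simpa [mul_sub] using (hcg t ht a ha).sub (hdh t ht a ha)

theorem const_mul (hg : HasBoundedTimeSeries g S) (p : ℂ) :
    HasBoundedTimeSeries (fun t a => p * g t a) S := by
  obtain ⟨c, C, hc, hcg⟩ := hg
  refine ⟨fun n => p • c n, ‖p‖ * C, fun n => ?_, fun t ht a ha => ?_⟩
  · rw [norm_smul]
    gcongr
    exact hc n
  · simpa [mul_left_comm] using (hcg t ht a ha).mul_left p

theorem comp {β : Type*} [TopologicalSpace β] (hg : HasBoundedTimeSeries g S) (φ : C(β, α))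
    {S' : Set β} (hφ : MapsTo φ S' S) : HasBoundedTimeSeries (fun t b => g t (φ b)) S' := by
  obtain ⟨c, C, hc, hcg⟩ := hg
  exact ⟨fun n => (c n).compContinuous φ, C,
    fun n => ((c n).norm_compContinuous_le φ).trans (hc n), fun t ht b hb => hcg t ht _ (hφ hb)⟩

theorem exists_holomorphic (hg : HasBoundedTimeSeries g S) {R : ℝ} (hR : R ∈ Ioo (0 : ℝ) 1) :
    ∃ (G : ℂ → α →ᵇ ℂ) (C : ℝ), DifferentiableOn ℂ G (Metric.ball 0 R) ∧
      (∀ ζ ∈ Metric.ball 0 R, ‖G ζ‖ ≤ C) ∧ ∀ t ∈ Ico 0 R, ∀ a ∈ S, G t a = g t a := by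
  obtain ⟨c, C, hc, hcg⟩ := hg
  have geometric := (hasSum_geometric_of_lt_one hR.1.le hR.2).mul_right C
  refine ⟨fun ζ => ∑' n, ζ ^ n • c n, _, ?_, fun ζ hζ =>
    tsum_of_norm_bounded geometric (norm_pow_smul_le hc hζ), fun t ht a ha => ?_⟩
  · exact Complex.differentiableOn_tsum_of_summable_norm geometric.summable
      (fun n => (differentiable_pow n).differentiableOn.smul_const (c n)) Metric.isOpen_ball
      fun n ζ hζ => norm_pow_smul_le hc hζ n
  · have ht_ball : (t : ℂ) ∈ Metric.ball 0 R := by simpa [abs_of_nonneg ht.1] using ht.2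
    have sum : HasSum (fun n => (t : ℂ) ^ n • c n) (∑' n, (t : ℂ) ^ n • c n) :=
      (Summable.of_norm_bounded geometric.summable (norm_pow_smul_le hc ht_ball)).hasSum
    exact ((BoundedContinuousFunction.evalCLM (β := ℂ) ℂ a).hasSum sum).unique
      (hcg t ⟨ht.1, ht.2.trans hR.2⟩ a ha)

end HasBoundedTimeSeries

end PowerSeries

section Data

theorem exists_contDiff_extension {f : ℝ → ℝ} (hf : ContDiffOn ℝ 1 f (Icc 0 1)) :
    ∃ g : ℝ → ℝ, ContDiff ℝ 1 g ∧ EqOn g f (Icc 0 1) := by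
  have continuous_deriv : Continuous (IccExtend zero_le_one
      ((Icc 0 1).domRestrict (derivWithin f (Icc 0 1)))) :=
    (hf.continuousOn_derivWithin (uniqueDiffOn_Icc zero_lt_one) le_rfl).domRestrict.Icc_extend'
  refine ⟨fun x => f 0 + ∫ s in (0 : ℝ)..x, _,
    contDiff_const.add (contDiff_primitive (n := 0) (contDiff_zero.2 continuous_deriv)),
    fun x hx => ?_⟩
  have fundamental := integral_eq_sub_of_hasDerivAt_of_le hx.1
    (hf.continuousOn.mono (Icc_subset_Icc_right hx.2)) (fun s hs => ?_)
    (continuous_deriv.intervalIntegrable 0 x)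
  · simp only [fundamental, add_sub_cancel]
  · have hs' : s ∈ Ioo (0 : ℝ) 1 := ⟨hs.1, hs.2.trans_le hx.2⟩
    rw [IccExtend_of_mem _ _ (Ioo_subset_Icc_self hs')]
    have := (hf.differentiableOn one_ne_zero s (Ioo_subset_Icc_self hs')).hasDerivWithinAt
    exact this.hasDerivAt (Icc_mem_nhds hs'.1 hs'.2)

theorem hasBoundedTimeSeries_of_spaceC1TimeAnalytic {f : ℝ → ℝ → ℝ} (hf : SpaceC1TimeAnalytic f) :
    HasBoundedTimeSeries (fun t x => (f x t : ℂ)) (Icc 0 1) := by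
  obtain ⟨hC1, c, C, hc, hcf⟩ := hf
  have cont : ∀ n, ContinuousOn (c n) (Icc 0 1) :=
    continuousOn_coeff_of_continuousOn_tsum hc fun t ht =>
      (hC1 t (Ioo_subset_Ico_self ht)).continuousOn.congr fun x hx =>
        (hcf x hx t (Ioo_subset_Ico_self ht)).symm
  have norm_clamped : ∀ n x, ‖(c n (projIcc (0 : ℝ) 1 zero_le_one x) : ℂ)‖ ≤ C := fun n x => by
    rw [Complex.norm_real]
    exact hc n _ (projIcc 0 1 zero_le_one x).2
  refine ⟨fun n => .ofNormedAddCommGroup (fun x => (c n (projIcc (0 : ℝ) 1 zero_le_one x) : ℂ))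
    (Complex.continuous_ofReal.comp (cont n).domRestrict.Icc_extend') C (norm_clamped n), C,
    fun n => BoundedContinuousFunction.norm_ofNormedAddCommGroup_le _ ?_ _, fun t ht x hx => ?_⟩
  · exact (norm_nonneg _).trans (norm_clamped n 0)
  · have := (summable_mul_pow_of_abs_le (fun n => hc n x hx) ht).hasSum
    rw [← hcf x hx t ht] at this
    convert Complex.hasSum_ofReal.2 this using 2 with n
    simp [projIcc_of_mem _ hx, mul_comm]

/-- In characteristic coordinates, the coefficient `p (b(y, t) - f(x, t))` of the equation for
`k + i k_c`, where `b = b_R - i b_I` and `f = f_R - i f_I`. -/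
noncomputable def kernelPotential (p : ℂ) (bR bI fR fI : ℝ → ℝ → ℝ) (t : ℝ) (z : ℝ × ℝ) : ℂ :=
  p * ((bR ((z.1 - z.2) / 2) t - Complex.I * bI ((z.1 - z.2) / 2) t)
    - (fR ((z.1 + z.2) / 2) t - Complex.I * fI ((z.1 + z.2) / 2) t))

theorem half_add_mem_Icc {z : ℝ × ℝ} (hz : z ∈ charTriangle) : (z.1 + z.2) / 2 ∈ Icc (0 : ℝ) 1 := by
  obtain ⟨h₀, h₁, h₂⟩ := hz
  constructor <;> linarith

theorem half_sub_mem_Icc {z : ℝ × ℝ} (hz : z ∈ charTriangle) : (z.1 - z.2) / 2 ∈ Icc (0 : ℝ) 1 := by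
  obtain ⟨h₀, h₁, h₂⟩ := hz
  constructor <;> linarith

variable {bR bI fR fI : ℝ → ℝ → ℝ}

theorem hasBoundedTimeSeries_kernelPotential (hbR : SpaceC1TimeAnalytic bR)
    (hbI : SpaceC1TimeAnalytic bI) (hfR : SpaceC1TimeAnalytic fR) (hfI : SpaceC1TimeAnalytic fI)
    (p : ℂ) : HasBoundedTimeSeries (kernelPotential p bR bI fR fI) charTriangle := by
  have pair : ∀ {u v : ℝ → ℝ → ℝ}, SpaceC1TimeAnalytic u → SpaceC1TimeAnalytic v →
      HasBoundedTimeSeries (fun t x => (u x t : ℂ) - Complex.I * v x t) (Icc 0 1) := fun hu hv =>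
    (hasBoundedTimeSeries_of_spaceC1TimeAnalytic hu).sub
      ((hasBoundedTimeSeries_of_spaceC1TimeAnalytic hv).const_mul Complex.I)
  exact (((pair hbR hbI).comp ⟨fun z : ℝ × ℝ => (z.1 - z.2) / 2, by fun_prop⟩
    fun z => half_sub_mem_Icc).sub ((pair hfR hfI).comp ⟨fun z : ℝ × ℝ => (z.1 + z.2) / 2,
      by fun_prop⟩ fun z => half_add_mem_Icc)).const_mul p

theorem exists_contDiff_extension_kernelPotential (hbR : SpaceC1TimeAnalytic bR)
    (hbI : SpaceC1TimeAnalytic bI) (hfR : SpaceC1TimeAnalytic fR) (hfI : SpaceC1TimeAnalytic fI)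
    (p : ℂ) {t : ℝ} (ht : t ∈ Ico (0 : ℝ) 1) :
    ∃ ℓ : ℝ × ℝ → ℂ, ContDiff ℝ 1 ℓ ∧ EqOn ℓ (kernelPotential p bR bI fR fI t) charTriangle := by
  have pair : ∀ {u v : ℝ → ℝ → ℝ}, SpaceC1TimeAnalytic u → SpaceC1TimeAnalytic v →
      ∃ g : ℝ → ℂ, ContDiff ℝ 1 g ∧
        EqOn g (fun x => (u x t : ℂ) - Complex.I * v x t) (Icc 0 1) := fun hu hv => by
    obtain ⟨g, cg, hg⟩ := exists_contDiff_extension (hu.1 t ht)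
    obtain ⟨h, ch, hh⟩ := exists_contDiff_extension (hv.1 t ht)
    exact ⟨fun x => g x - Complex.I * h x, (Complex.ofRealCLM.contDiff.comp cg).sub
      (contDiff_const.mul (Complex.ofRealCLM.contDiff.comp ch)),
      fun x hx => by simp only [hg hx, hh hx]⟩
  obtain ⟨b, cb, hb⟩ := pair hbR hbI
  obtain ⟨f, cf, hf⟩ := pair hfR hfI
  refine ⟨fun z => p * (b ((z.1 - z.2) / 2) - f ((z.1 + z.2) / 2)), by fun_prop, fun z hz => ?_⟩
  simp only [kernelPotential, hb (half_sub_mem_Icc hz), hf (half_add_mem_Icc hz)]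

end Data

section ClassicalSolution

theorem charIntegral_congr {E : Type*} [NormedAddCommGroup E] [NormedSpace ℝ E]
    {F G : ℝ × ℝ → E} (h : EqOn F G charTriangle) {z : ℝ × ℝ}
    (hz : z ∈ charTriangle) : charIntegral F z = charIntegral G z := by
  refine integral_congr fun τ hτ => integral_congr fun s hs => h ?_
  rw [uIcc_of_le hz.1] at hτ
  rw [uIcc_of_le hz.2.1] at hs
  exact rectangle_subset_charTriangle hz ⟨hs, hτ⟩

theorem edgeIntegral_congr {E : Type*} [NormedAddCommGroup E] [NormedSpace ℝ E]
    {F G : ℝ × ℝ → E} (h : EqOn F G charTriangle) {z : ℝ × ℝ}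
    (hz : z ∈ charTriangle) : edgeIntegral F z = edgeIntegral G z := by
  refine integral_congr fun s hs => h ?_
  rw [uIcc_of_le hz.2.1] at hs
  exact rectangle_subset_charTriangle hz ⟨hs, le_rfl, hz.1⟩

/-- The solution of the Goursat problem `4 ∂₁∂₂Z = F` which vanishes on the diagonal and has
`4 ∂₁Z = -ℓ` on the first axis. -/
noncomputable def goursatSolution (ℓ F : ℝ × ℝ → ℂ) (z : ℝ × ℝ) : ℂ :=
  (-4⁻¹ : ℝ) • edgeIntegral ℓ z + (4⁻¹ : ℝ) • charIntegral F z

theorem contDiff_goursatSolution {ℓ F : ℝ × ℝ → ℂ} {n : ℕ} (hℓ : ContDiff ℝ n ℓ)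
    (hF : ContDiff ℝ n F) : ContDiff ℝ (n + 1) (goursatSolution ℓ F) :=
  ((contDiff_edgeIntegral hℓ).const_smul _).add ((contDiff_charIntegral hF).const_smul _)

theorem goursatSolution_congr {ℓ ℓ' F F' : ℝ × ℝ → ℂ} (hℓ : EqOn ℓ ℓ' charTriangle)
    (hF : EqOn F F' charTriangle) :
    EqOn (goursatSolution ℓ F) (goursatSolution ℓ' F') charTriangle := fun z hz => by
  rw [goursatSolution, goursatSolution, edgeIntegral_congr hℓ hz, charIntegral_congr hF hz]

theorem eqOn_goursatSolution (a b : ℝ × ℝ →ᵇ ℂ) :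
    EqOn (-(4⁻¹ : ℂ) • edgeIntegralCLM a + (4⁻¹ : ℂ) • charIntegralCLM b) (goursatSolution a b)
      charTriangle := fun z hz => by
  simp [goursatSolution, edgeIntegralCLM_apply_of_mem _ hz, charIntegralCLM_apply_of_mem _ hz]

theorem goursatSolution_diagonal (ℓ F : ℝ × ℝ → ℂ) (s : ℝ) : goursatSolution ℓ F (s, s) = 0 := by
  simp [goursatSolution, edgeIntegral, charIntegral]

theorem goursatSolution_axis (ℓ F : ℝ × ℝ → ℂ) (s : ℝ) :
    goursatSolution ℓ F (s, 0) = -(4⁻¹ : ℂ) * ∫ σ in (0 : ℝ)..s, ℓ (σ, 0) := by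
  simp [goursatSolution, edgeIntegral, charIntegral]

variable {Λ V : ℂ → ℝ × ℝ →ᵇ ℂ} {p : ℂ} {R : ℝ}

theorem exists_contDiff_eqOn_of_goursat_equation (hΛ : DifferentiableOn ℂ Λ (Metric.ball 0 R))
    (hV : DifferentiableOn ℂ V (Metric.ball 0 R))
    (hVΛ : ∀ ζ ∈ Metric.ball 0 R, V ζ = -(4⁻¹ : ℂ) • edgeIntegralCLM (Λ ζ)
      + (4⁻¹ : ℂ) • charIntegralCLM (Λ ζ * V ζ + p • deriv V ζ))
    {ζ : ℂ} (hζ : ζ ∈ Metric.ball 0 R) :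
    (∃ G : ℝ × ℝ → ℂ, ContDiff ℝ 1 G ∧ EqOn (⇑(V ζ)) G charTriangle) ∧
      ∃ G : ℝ × ℝ → ℂ, ContDiff ℝ 1 G ∧ EqOn (⇑(deriv V ζ)) G charTriangle := by
  have smooth : ∀ a b : ℝ × ℝ →ᵇ ℂ, ContDiff ℝ 1 (goursatSolution a b) := fun a b =>
    contDiff_goursatSolution (n := 0) (contDiff_zero.2 a.continuous) (contDiff_zero.2 b.continuous)
  have nhds_ζ := Metric.isOpen_ball.mem_nhds hζ
  have derivΛ := (hΛ.differentiableAt nhds_ζ).hasDerivAt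
  have derivV := ((hΛ.mul hV).add ((hV.deriv Metric.isOpen_ball).const_smul p)).differentiableAt
    nhds_ζ |>.hasDerivAt
  have equation' := ((edgeIntegralCLM.hasFDerivAt.comp_hasDerivAt ζ derivΛ).const_smul
    (-(4⁻¹ : ℂ))).add ((charIntegralCLM.hasFDerivAt.comp_hasDerivAt ζ derivV).const_smul (4⁻¹ : ℂ))
  refine ⟨⟨_, smooth (Λ ζ) (Λ ζ * V ζ + p • deriv V ζ), fun z hz => ?_⟩,
    ⟨_, smooth (deriv Λ ζ) (deriv (Λ * V + p • deriv V) ζ), fun z hz => ?_⟩⟩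
  · rw [← eqOn_goursatSolution _ _ hz, ← hVΛ ζ hζ]
  · rw [(equation'.congr_of_eventuallyEq (Filter.eventually_of_mem nhds_ζ hVΛ)).deriv]
    exact eqOn_goursatSolution _ _ hz

theorem exists_goursatSolution_eqOn (hΛ : DifferentiableOn ℂ Λ (Metric.ball 0 R))
    (hV : DifferentiableOn ℂ V (Metric.ball 0 R))
    (hVΛ : ∀ ζ ∈ Metric.ball 0 R, V ζ = -(4⁻¹ : ℂ) • edgeIntegralCLM (Λ ζ)
      + (4⁻¹ : ℂ) • charIntegralCLM (Λ ζ * V ζ + p • deriv V ζ))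
    {ζ : ℂ} (hζ : ζ ∈ Metric.ball 0 R) {ℓ : ℝ × ℝ → ℂ} (cℓ : ContDiff ℝ 1 ℓ)
    (hℓ : EqOn ℓ (Λ ζ) charTriangle) :
    ∃ F : ℝ × ℝ → ℂ, ContDiff ℝ 1 F ∧
      EqOn F (Λ ζ * V ζ + p • deriv V ζ : ℝ × ℝ →ᵇ ℂ) charTriangle ∧
      EqOn (goursatSolution ℓ F) (V ζ) charTriangle := by
  obtain ⟨⟨G, cG, hG⟩, G', cG', hG'⟩ := exists_contDiff_eqOn_of_goursat_equation hΛ hV hVΛ hζ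
  have source : EqOn (fun z => ℓ z * G z + p * G' z)
      (Λ ζ * V ζ + p • deriv V ζ : ℝ × ℝ →ᵇ ℂ) charTriangle := fun z hz => by
    simp [hℓ hz, hG hz, hG' hz]
  refine ⟨_, by fun_prop, source, fun z hz => ?_⟩
  rw [goursatSolution_congr hℓ source hz, ← eqOn_goursatSolution _ _ hz, ← hVΛ ζ hζ]

end ClassicalSolution

section Existence

theorem mem_Omega_iff_char {x y : ℝ} : (x + y, x - y) ∈ charTriangle ↔ (x, y) ∈ Omega := by
  simp only [charTriangle, Omega, mem_ofPred_eq]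
  constructor <;> rintro ⟨h₀, h₁, h₂⟩ <;> refine ⟨?_, ?_, ?_⟩ <;> linarith

theorem wave_equation_of_mixedDeriv (L : ℂ →L[ℝ] ℝ) {Z : ℝ × ℝ → ℂ} {x y : ℝ}
    (hZ : ContDiffAt ℝ 2 Z (x + y, x - y)) :
    deriv (fun x' => deriv (fun x'' => L (Z (x'' + y, x'' - y))) x') x
      = deriv (fun y' => deriv (fun y'' => L (Z (x + y'', x - y''))) y') y
        + L (4 * mixedDeriv Z (x + y, x - y)) := by
  have wave := deriv_deriv_sub_deriv_deriv_eq_four_smul_mixedDeriv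
    (f := L ∘ Z) (x := x) (y := y) (L.contDiff.contDiffAt.comp _ hZ)
  rw [mixedDeriv_clm_comp L hZ, sub_eq_iff_eq_add'] at wave
  have four : (4 : ℂ) * mixedDeriv Z (x + y, x - y) = (4 : ℝ) • mixedDeriv Z (x + y, x - y) := by
    simp
  rw [four, L.map_smul]
  exact wave

variable {β βc : ℝ → ℝ → ℝ → ℝ} {p₁ p₂ t₀ : ℝ} {ℓ : ℝ → ℝ × ℝ → ℂ}

theorem boundary_value_of_axis_value {Z : ℝ × ℝ → ℂ} {l : ℝ × ℝ → ℂ} {b bc : ℝ → ℝ}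
    (hl : ContinuousOn l charTriangle)
    (hb : ∀ x, l (x + x, x - x) = b x - Complex.I * bc x)
    (axis : ∀ s ∈ Icc (0 : ℝ) 2, Z (s, 0) = -(4⁻¹ : ℂ) * ∫ σ in (0 : ℝ)..s, l (σ, 0))
    {x : ℝ} (hx : x ∈ Icc (0 : ℝ) 1) :
    (Z (x + x, x - x)).re = -(1 / 2) * ∫ γ in (0 : ℝ)..x, b γ ∧
      (Z (x + x, x - x)).im = (1 / 2) * ∫ γ in (0 : ℝ)..x, bc γ := by
  have integrable : IntervalIntegrable (fun γ => l (γ + γ, γ - γ)) MeasureTheory.volume 0 x := by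
    refine ((hl.comp (by fun_prop : ContinuousOn (fun γ : ℝ => (γ + γ, γ - γ)) (Icc 0 x))
      fun γ hγ => ?_)).intervalIntegrable_of_Icc hx.1
    exact mem_Omega_iff_char.2 ⟨hγ.1, le_rfl, hγ.2.trans hx.2⟩
  have value : Z (x + x, x - x) = -(2⁻¹ : ℂ) * ∫ γ in (0 : ℝ)..x, l (γ + γ, γ - γ) := by
    have substitution := smul_integral_comp_mul_left (fun σ => l (σ, 0)) (2 : ℝ)
      (a := 0) (b := x)
    simp only [mul_zero, two_mul] at substitution
    rw [sub_self, axis _ ⟨by linarith [hx.1], by linarith [hx.2]⟩, ← substitution]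
    simp only [sub_self, Complex.real_smul]
    push_cast
    ring
  have re_integral := Complex.reCLM.intervalIntegral_comp_comm integrable
  have im_integral := Complex.imCLM.intervalIntegral_comp_comm integrable
  simp only [hb, Complex.reCLM_apply, Complex.imCLM_apply, Complex.sub_re, Complex.sub_im,
    Complex.ofReal_re, Complex.ofReal_im, Complex.I_mul_re, Complex.I_mul_im, neg_zero, sub_zero,
    zero_sub, integral_neg] at re_integral im_integral
  simp only [value, hb]
  constructor
  · simp [re_integral]
  · simp [← im_integral]

theorem isNeumannKernelSol_of_char {Z Z' : ℝ → ℝ × ℝ → ℂ}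
    (hβ : ∀ x y t, ℓ t (x + y, x - y) = β x y t - Complex.I * βc x y t)
    (hℓ : ∀ t ∈ Ioo (0 : ℝ) t₀, ContinuousOn (ℓ t) charTriangle)
    (hZ : ∀ t ∈ Ioo (0 : ℝ) t₀, ContDiff ℝ 2 (Z t))
    (hZ' : ∀ t ∈ Ioo (0 : ℝ) t₀, ∀ z ∈ charTriangle, HasDerivAt (fun t => Z t z) (Z' t z) t)
    (wave : ∀ t ∈ Ioo (0 : ℝ) t₀, ∀ z ∈ charTriangle,
      4 * mixedDeriv (Z t) z = ℓ t z * Z t z + (p₁ - Complex.I * p₂) * Z' t z)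
    (diagonal : ∀ t ∈ Ioo (0 : ℝ) t₀, ∀ s, Z t (s, s) = 0)
    (axis : ∀ t ∈ Ioo (0 : ℝ) t₀, ∀ s ∈ Icc (0 : ℝ) 2,
      Z t (s, 0) = -(4⁻¹ : ℂ) * ∫ σ in (0 : ℝ)..s, ℓ t (σ, 0)) :
    IsNeumannKernelSol β βc p₁ p₂ p₁ (-p₂) t₀ (fun x y t => (Z t (x + y, x - y)).re)
      fun x y t => (Z t (x + y, x - y)).im := by
  have re_deriv : ∀ x y, (x, y) ∈ Omega → ∀ t ∈ Ioo (0 : ℝ) t₀,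
      HasDerivAt (fun t => (Z t (x + y, x - y)).re) (Z' t (x + y, x - y)).re t :=
    fun x y hxy t ht => Complex.reCLM.hasFDerivAt.comp_hasDerivAt t
      (hZ' t ht _ (mem_Omega_iff_char.2 hxy))
  have im_deriv : ∀ x y, (x, y) ∈ Omega → ∀ t ∈ Ioo (0 : ℝ) t₀,
      HasDerivAt (fun t => (Z t (x + y, x - y)).im) (Z' t (x + y, x - y)).im t :=
    fun x y hxy t ht => Complex.imCLM.hasFDerivAt.comp_hasDerivAt t
      (hZ' t ht _ (mem_Omega_iff_char.2 hxy))
  have smooth : ∀ t ∈ Ioo (0 : ℝ) t₀, ContDiff ℝ 2 fun w : ℝ × ℝ => Z t (w.1 + w.2, w.1 - w.2) :=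
    fun t ht => (hZ t ht).comp (by fun_prop)
  refine ⟨fun t ht => (Complex.reCLM.contDiff.comp (smooth t ht)).contDiffOn,
    fun t ht => (Complex.imCLM.contDiff.comp (smooth t ht)).contDiffOn,
    fun x y hxy t ht => ⟨(re_deriv x y hxy t ht).differentiableAt,
      (im_deriv x y hxy t ht).differentiableAt⟩,
    fun x y hxy t ht => ?_, fun x hx t ht => ?_, fun t ht => ?_⟩
  · have re_wave := wave_equation_of_mixedDeriv Complex.reCLM (x := x) (y := y)
      (hZ t ht).contDiffAt
    have im_wave := wave_equation_of_mixedDeriv Complex.imCLM (x := x) (y := y)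
      (hZ t ht).contDiffAt
    simp only [wave t ht _ (mem_Omega_iff_char.2 hxy), hβ, Complex.reCLM_apply,
      Complex.imCLM_apply] at re_wave im_wave
    simp only [pXX, pYY, pT, (re_deriv x y hxy t ht).deriv, (im_deriv x y hxy t ht).deriv,
      re_wave, im_wave]
    constructor <;> simp <;> ring
  · have boundary := boundary_value_of_axis_value (hℓ t ht) (fun x => hβ x x t) (axis t ht) hx
    exact ⟨boundary.1, boundary.2, by simp [pX, diagonal t ht], by simp [pX, diagonal t ht]⟩
  · simp [diagonal t ht]

theorem exists_isNeumannKernelSol_of_goursat_equation {Λ V : ℂ → ℝ × ℝ →ᵇ ℂ} {R : ℝ}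
    (hR : t₀ < R)
    (smooth : ∀ t ∈ Ioo (0 : ℝ) t₀, ∃ l : ℝ × ℝ → ℂ, ContDiff ℝ 1 l ∧ EqOn l (ℓ t) charTriangle)
    (hβ : ∀ x y t, ℓ t (x + y, x - y) = β x y t - Complex.I * βc x y t)
    (hΛ : DifferentiableOn ℂ Λ (Metric.ball 0 R))
    (hΛℓ : ∀ t ∈ Ico 0 R, ∀ z ∈ charTriangle, Λ t z = ℓ t z)
    (hV : DifferentiableOn ℂ V (Metric.ball 0 R))
    (hVΛ : ∀ ζ ∈ Metric.ball 0 R, V ζ = -(4⁻¹ : ℂ) • edgeIntegralCLM (Λ ζ)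
      + (4⁻¹ : ℂ) • charIntegralCLM (Λ ζ * V ζ + ((p₁ : ℂ) - Complex.I * p₂) • deriv V ζ)) :
    ∃ k kc : ℝ → ℝ → ℝ → ℝ, IsNeumannKernelSol β βc p₁ p₂ p₁ (-p₂) t₀ k kc ∧
      ∀ x y : ℝ, (x, y) ∈ Omega → ∀ t ∈ Ioo (0 : ℝ) t₀,
        |k x y t| ≤ ‖V t‖ ∧ |kc x y t| ≤ ‖V t‖ := by
  have mem_ball : ∀ t ∈ Ioo (0 : ℝ) t₀, (t : ℂ) ∈ Metric.ball (0 : ℂ) R := fun t ht => by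
    simpa [abs_of_pos ht.1] using ht.2.trans hR
  choose! l cl hl using smooth
  have l_eq : ∀ t ∈ Ioo (0 : ℝ) t₀, EqOn (l t) (Λ t) charTriangle := fun t ht z hz =>
    (hl t ht hz).trans (hΛℓ t ⟨ht.1.le, ht.2.trans hR⟩ z hz).symm
  choose! F cF hF hZV using fun t (ht : t ∈ Ioo (0 : ℝ) t₀) =>
    exists_goursatSolution_eqOn hΛ hV hVΛ (mem_ball t ht) (cl t ht) (l_eq t ht)
  have smooth_solution : ∀ t ∈ Ioo (0 : ℝ) t₀, ContDiff ℝ 2 (goursatSolution (l t) (F t)) :=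
    fun t ht => contDiff_goursatSolution (n := 1) (cl t ht) (cF t ht)
  refine ⟨_, _, isNeumannKernelSol_of_char (Z := fun t => goursatSolution (l t) (F t))
    (Z' := fun t => ⇑(deriv V (t : ℂ))) hβ
    (fun t ht => (cl t ht).continuous.continuousOn.congr fun z hz => (hl t ht hz).symm)
    smooth_solution (fun t ht z hz => ?time) (fun t ht z hz => ?wave)
    (fun t _ => goursatSolution_diagonal _ _) (fun t ht s hs => ?axis), fun x y hxy t ht => ?bound⟩
  case time =>
    have derivV := (hasDerivAt_boundedContinuousFunction_apply ((hV.differentiableAt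
      (Metric.isOpen_ball.mem_nhds (mem_ball t ht))).hasDerivAt) z).comp_ofReal
    exact derivV.congr_of_eventuallyEq (Filter.eventually_of_mem (isOpen_Ioo.mem_nhds ht)
      fun t' ht' => hZV t' ht' hz)
  case wave =>
    have mixed := mixedDeriv_edgeIntegral_add_charIntegral (cl t ht) (cF t ht) (-4⁻¹) 4⁻¹ z
    have source : F t z = ℓ t z * goursatSolution (l t) (F t) z
        + (p₁ - Complex.I * p₂) * deriv V (t : ℂ) z := by
      rw [hF t ht hz, hZV t ht hz, ← hl t ht hz, l_eq t ht hz]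
      simp
    rw [← source, show mixedDeriv (goursatSolution (l t) (F t)) z = _ from mixed]
    simp
  case axis =>
    rw [goursatSolution_axis]
    congr 1
    refine integral_congr fun σ hσ => hl t ht ?_
    rw [uIcc_of_le hs.1] at hσ
    exact ⟨le_rfl, hσ.1, by simpa using hσ.2.trans hs.2⟩
  case bound =>
    have bound : ‖goursatSolution (l t) (F t) (x + y, x - y)‖ ≤ ‖V t‖ := by
      rw [hZV t ht (mem_Omega_iff_char.2 hxy)]
      exact (V t).norm_coe_le_norm _
    exact ⟨(Complex.abs_re_le_norm _).trans bound, (Complex.abs_im_le_norm _).trans bound⟩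

theorem exists_norm_le_of_differentiableOn_ball {F : Type*} [NormedAddCommGroup F]
    [NormedSpace ℂ F] {V : ℂ → F} {R : ℝ} (hV : DifferentiableOn ℂ V (Metric.ball 0 R))
    (hR : t₀ < R) : ∃ B : ℝ, ∀ t ∈ Ioo (0 : ℝ) t₀, ‖V t‖ ≤ B := by
  obtain ⟨B, hB⟩ := (isCompact_closedBall (0 : ℂ) t₀).exists_bound_of_continuousOn
    (hV.continuousOn.mono (Metric.closedBall_subset_ball hR))
  exact ⟨B, fun t ht => hB t (by simpa [abs_of_pos ht.1] using ht.2.le)⟩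

theorem exists_bounded_isNeumannKernelSol (series : HasBoundedTimeSeries ℓ charTriangle)
    (smooth : ∀ t ∈ Ico (0 : ℝ) 1, ∃ l : ℝ × ℝ → ℂ, ContDiff ℝ 1 l ∧ EqOn l (ℓ t) charTriangle)
    (hβ : ∀ x y t, ℓ t (x + y, x - y) = β x y t - Complex.I * βc x y t) (p₁ p₂ : ℝ)
    (ht₀ : t₀ ∈ Ioo (0 : ℝ) 1) :
    ∃ k kc : ℝ → ℝ → ℝ → ℝ, IsNeumannKernelSol β βc p₁ p₂ p₁ (-p₂) t₀ k kc ∧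
      ∃ B : ℝ, ∀ x y : ℝ, (x, y) ∈ Omega → ∀ t ∈ Ioo (0 : ℝ) t₀,
        |k x y t| ≤ B ∧ |kc x y t| ≤ B := by
  obtain ⟨R, ht₀R, hR⟩ := exists_between ht₀.2
  obtain ⟨Λ, C, hΛ, hC, hΛℓ⟩ := series.exists_holomorphic ⟨ht₀.1.trans ht₀R, hR⟩
  obtain ⟨V, hV, hVΛ⟩ := exists_solution_of_goursat_equation hR.le (p₁ - Complex.I * p₂) hΛ hC
  obtain ⟨k, kc, sol, hkV⟩ :=
    exists_isNeumannKernelSol_of_goursat_equation ht₀R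
      (fun t ht => smooth t ⟨ht.1.le, ht.2.trans ht₀.2⟩) hβ hΛ hΛℓ hV hVΛ
  obtain ⟨B, hB⟩ := exists_norm_le_of_differentiableOn_ball hV ht₀R
  exact ⟨k, kc, sol, B, fun x y hxy t ht =>
    ⟨(hkV x y hxy t ht).1.trans (hB t ht), (hkV x y hxy t ht).2.trans (hB t ht)⟩⟩

end Existence

section Duality

variable {Λ : ℂ → ℝ × ℝ →ᵇ ℂ} {W : ℝ → ℝ × ℝ →ᵇ ℂ} {p : ℂ} {a b R C N : ℝ}

theorem integral_boundedContinuousFunction_apply {F : ℝ → ℝ × ℝ →ᵇ ℂ}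
    (hF : IntervalIntegrable F MeasureTheory.volume a b) (z : ℝ × ℝ) :
    (∫ t in a..b, F t) z = ∫ t in a..b, F t z :=
  ((BoundedContinuousFunction.evalCLM (β := ℂ) ℂ z).intervalIntegral_comp_comm hF).symm

theorem charIntegral_integral {F : ℝ → ℝ × ℝ →ᵇ ℂ}
    (hF : IntervalIntegrable F MeasureTheory.volume a b) {z : ℝ × ℝ} (hz : z ∈ charTriangle) :
    charIntegral (fun w => ∫ t in a..b, F t w) z = ∫ t in a..b, charIntegralCLM (F t) z := by
  have hF' : IntervalIntegrable (fun t => charIntegralCLM (F t)) MeasureTheory.volume a b :=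
    ⟨charIntegralCLM.integrable_comp hF.1, charIntegralCLM.integrable_comp hF.2⟩
  simp only [← integral_boundedContinuousFunction_apply hF]
  rw [← charIntegralCLM_apply_of_mem _ hz, ← integral_boundedContinuousFunction_apply hF',
    charIntegralCLM.intervalIntegral_comp_comm hF]

theorem continuousOn_comp_ofReal {F : Type*} [TopologicalSpace F] {f : ℂ → F}
    (hf : ContinuousOn f (Metric.ball 0 R)) (hball : ∀ t ∈ Icc a b, (t : ℂ) ∈ Metric.ball 0 R) :
    ContinuousOn (fun t : ℝ => f t) (Icc a b) :=
  hf.comp Complex.continuous_ofReal.continuousOn hball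

theorem integral_mul_eq_neg_integral_deriv_mul (hab : a ≤ b)
    (hball : ∀ t ∈ Icc a b, (t : ℂ) ∈ Metric.ball 0 R) {φ : ℂ → ℂ}
    (hφ : DifferentiableOn ℂ φ (Metric.ball 0 R)) (ha : φ a = 0) (hb : φ b = 0) {H H' : ℝ → ℂ}
    (cH : ContinuousOn H (Icc a b)) (cH' : ContinuousOn H' (Icc a b))
    (hH : ∀ t ∈ Ioo a b, HasDerivAt H (H' t) t) :
    ∫ t in a..b, φ t * H' t = -∫ t in a..b, deriv φ t * H t := by
  have cφ' := continuousOn_comp_ofReal (hφ.deriv Metric.isOpen_ball).continuousOn hball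
  rw [integral_mul_deriv_eq_deriv_mul_of_hasDerivAt (u := fun t : ℝ => φ t)
    (u' := fun t : ℝ => deriv φ t) (v := H), ha, hb, zero_mul, zero_mul, sub_self, zero_sub]
  · rw [uIcc_of_le hab]
    exact continuousOn_comp_ofReal hφ.continuousOn hball
  · rwa [uIcc_of_le hab]
  · rw [min_eq_left hab, max_eq_right hab]
    exact fun t ht => (hφ.differentiableAt (Metric.isOpen_ball.mem_nhds
      (hball t (Ioo_subset_Icc_self ht)))).hasDerivAt.comp_ofReal
  · rwa [min_eq_left hab, max_eq_right hab]
  · exact cφ'.intervalIntegrable_of_Icc hab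
  · exact cH'.intervalIntegrable_of_Icc hab

theorem charIntegral_integral_sub_mul (hab : a ≤ b) {f g : ℝ → ℂ} {U : ℝ → ℝ × ℝ →ᵇ ℂ}
    (hf : ContinuousOn f (Icc a b)) (hg : ContinuousOn g (Icc a b))
    (hU : ContinuousOn U (Icc a b)) (hW : ContinuousOn W (Icc a b))
    {z : ℝ × ℝ} (hz : z ∈ charTriangle) :
    charIntegral (fun w => ∫ t in a..b, (f t * U t w - g t) * W t w) z
      = (∫ t in a..b, f t * charIntegralCLM (U t * W t) z)
        - ∫ t in a..b, g t * charIntegralCLM (W t) z := by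
  have integrable : ∀ {h : ℝ → ℂ} {F : ℝ → ℝ × ℝ →ᵇ ℂ}, ContinuousOn h (Icc a b) →
      ContinuousOn F (Icc a b) → IntervalIntegrable (fun t => h t * charIntegralCLM (F t) z)
        MeasureTheory.volume a b := fun hh hF =>
    (hh.mul ((BoundedContinuousFunction.evalCLM (β := ℂ) ℂ z).continuous.comp_continuousOn
      (charIntegralCLM.continuous.comp_continuousOn hF))).intervalIntegrable_of_Icc hab
  rw [← integral_sub (integrable (F := fun t => U t * W t) hf (hU.mul hW)) (integrable hg hW)]
  convert charIntegral_integral (F := fun t => f t • (U t * W t) - g t • W t)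
    (((hf.smul (hU.mul hW)).sub (hg.smul hW)).intervalIntegrable_of_Icc hab) hz using 1
  · congr! 4 with w t
    simp only [BoundedContinuousFunction.coe_sub, BoundedContinuousFunction.coe_smul,
      BoundedContinuousFunction.coe_mul, Pi.sub_apply, Pi.mul_apply, smul_eq_mul]
    ring
  · congr! 2 with t
    simp

/-- The equation `4 W = J (Λ W) + p ∂ₜ (J W)` for `a < t < b`, where `J` is `charIntegral`: the
equation `4 ∂₁∂₂Q = Λ Q + p ∂ₜQ` with zero data, integrated over characteristic rectangles. -/
def IsIntegratedWave (Λ : ℂ → ℝ × ℝ →ᵇ ℂ) (p : ℂ) (W : ℝ → ℝ × ℝ →ᵇ ℂ) (a b : ℝ) : Prop :=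
  ∀ t ∈ Ioo a b, ∀ z ∈ charTriangle, HasDerivAt (fun t => charIntegralCLM (W t) z)
    (p⁻¹ * (4 * W t z - charIntegralCLM (Λ t * W t) z)) t

/-- Testing the integrated equation against a holomorphic function of time which vanishes at
both ends moves the time derivative onto the test function. -/
theorem four_mul_integral_mul_eq_charIntegral (hab : a ≤ b)
    (hball : ∀ t ∈ Icc a b, (t : ℂ) ∈ Metric.ball 0 R)
    (hΛ : DifferentiableOn ℂ Λ (Metric.ball 0 R)) (hW : ContinuousOn W (Icc a b)) (hp : p ≠ 0)
    (hWΛ : IsIntegratedWave Λ p W a b)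
    {φ : ℂ → ℂ} (hφ : DifferentiableOn ℂ φ (Metric.ball 0 R)) (ha : φ a = 0) (hb : φ b = 0)
    {z : ℝ × ℝ} (hz : z ∈ charTriangle) :
    4 * ∫ t in a..b, φ t * W t z
      = charIntegral (fun w => ∫ t in a..b, (φ t * Λ t w - p * deriv φ t) * W t w) z := by
  have cφ := continuousOn_comp_ofReal hφ.continuousOn hball
  have cφ' := continuousOn_comp_ofReal (hφ.deriv Metric.isOpen_ball).continuousOn hball
  have cΛ := continuousOn_comp_ofReal hΛ.continuousOn hball
  have apply_cont : ∀ {F : ℝ → ℝ × ℝ →ᵇ ℂ}, ContinuousOn F (Icc a b) →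
      ContinuousOn (fun t => F t z) (Icc a b) := fun hF =>
    (BoundedContinuousFunction.evalCLM (β := ℂ) ℂ z).continuous.comp_continuousOn hF
  have cJ : ContinuousOn (fun t : ℝ => charIntegralCLM (Λ t * W t) z) (Icc a b) :=
    apply_cont (charIntegralCLM.continuous.comp_continuousOn (cΛ.mul hW))
  have cH' : ContinuousOn (fun t : ℝ => p⁻¹ * (4 * W t z - charIntegralCLM (Λ t * W t) z))
      (Icc a b) := (((apply_cont hW).const_mul 4).sub cJ).const_mul p⁻¹
  have by_parts := integral_mul_eq_neg_integral_deriv_mul hab hball hφ ha hb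
    (H := fun t => charIntegralCLM (W t) z)
    (apply_cont (charIntegralCLM.continuous.comp_continuousOn hW)) cH' fun t ht => hWΛ t ht z hz
  rw [charIntegral_integral_sub_mul hab cφ (cφ'.const_mul p) cΛ hW hz, sub_eq_add_neg]
  simp only [mul_assoc p, integral_const_mul]
  rw [← mul_neg, ← by_parts, ← integral_const_mul,
    ← integral_const_mul, ← integral_add ((cφ.fun_mul cJ).intervalIntegrable_of_Icc hab)
      (((cφ.fun_mul cH').const_mul p).intervalIntegrable_of_Icc hab)]
  refine integral_congr fun t _ => ?_
  field_simp
  ring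

theorem norm_transport_le (hR : R ≤ 1) {g : ℂ → ℂ} (hg : DifferentiableOn ℂ g (Metric.ball 0 R))
    {B : ℝ} {k m n : ℕ} (hB : ∀ w ∈ Metric.ball 0 R, ‖g w‖ ≤ B / (R - ‖w‖) ^ k) (hn : m + k < n)
    {w l ω ω' : ℂ} (hw : w ∈ Metric.ball 0 R) (hl : ‖l‖ ≤ C) (hω : ‖ω‖ ≤ 4) (hω' : ‖ω'‖ ≤ 4)
    (p : ℂ) :
    ‖ω * (l * g w + -p * deriv g w) - p * ((m + 1) * ω' * g w)‖
      ≤ 4 * (C + 4 * ‖p‖) * n * B / (R - ‖w‖) ^ (k + 1) := by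
  have hd₀ : 0 < R - ‖w‖ := sub_pos.2 (mem_ball_zero_iff.1 hw)
  have hd₁ : R - ‖w‖ ≤ 1 := by linarith [norm_nonneg w]
  have hB₀ : 0 ≤ B := by
    have := (norm_nonneg _).trans (hB w hw)
    rwa [le_div_iff₀ (by positivity), zero_mul] at this
  have hC : 0 ≤ C := (norm_nonneg l).trans hl
  have hk : (k : ℝ) + 1 ≤ n := by exact_mod_cast (by omega : k + 1 ≤ n)
  have hm : (m : ℝ) + 1 ≤ n := by exact_mod_cast (by omega : m + 1 ≤ n)
  set D := B / (R - ‖w‖) ^ (k + 1) with hD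
  have : 0 ≤ D := by positivity
  have norm_g : ‖g w‖ ≤ D := (hB w hw).trans
    (div_le_div_of_nonneg_left hB₀ (by positivity) (pow_le_pow_of_le_one hd₀.le hd₁ k.le_succ))
  have transport : ‖l * g w + -p * deriv g w‖ ≤ (C + 3 * ‖p‖) * n * D := by
    refine (norm_mul_add_mul_deriv_le hR hg hB (-p) hw hl).trans ?_
    rw [norm_neg, hD, mul_div_assoc', mul_right_comm]
    gcongr
  have norm_succ : ‖(m : ℂ) + 1‖ = m + 1 := by exact_mod_cast Complex.norm_natCast (m + 1)
  calc ‖ω * (l * g w + -p * deriv g w) - p * ((m + 1) * ω' * g w)‖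
      ≤ ‖ω‖ * ‖l * g w + -p * deriv g w‖ + ‖p‖ * ((m + 1) * ‖ω'‖ * ‖g w‖) := by
        refine (norm_sub_le _ _).trans_eq ?_
        simp only [norm_mul, norm_succ]
    _ ≤ 4 * ((C + 3 * ‖p‖) * n * D) + ‖p‖ * (n * 4 * D) := by gcongr
    _ = 4 * (C + 4 * ‖p‖) * n * B / (R - ‖w‖) ^ (k + 1) := by rw [hD]; ring

theorem norm_le_four_of_mem_ball (hR : R ≤ 1) (ha : 0 ≤ a) (hab : a ≤ b) (hbR : b < R) {w : ℂ}
    (hw : w ∈ Metric.ball 0 R) : ‖(w - a) * (b - w)‖ ≤ 4 ∧ ‖(b - w) - (w - a)‖ ≤ 4 := by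
  have hw₁ : ‖w‖ ≤ 1 := (mem_ball_zero_iff.1 hw).le.trans hR
  have left : ‖w - a‖ ≤ 2 := by
    refine (norm_sub_le _ _).trans ?_
    rw [Complex.norm_of_nonneg ha]
    linarith
  have right : ‖b - w‖ ≤ 2 := by
    refine (norm_sub_le _ _).trans ?_
    rw [Complex.norm_of_nonneg (ha.trans hab)]
    linarith
  constructor
  · rw [norm_mul]
    nlinarith [norm_nonneg (w - a), norm_nonneg (b - w)]
  · exact (norm_sub_le _ _).trans (by linarith)

theorem deriv_bump_pow_mul (m : ℕ) {g : ℂ → ℂ} {w : ℂ} (hg : DifferentiableAt ℂ g w) (a b : ℂ) :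
    deriv (fun w => ((w - a) * (b - w)) ^ (m + 1) * g w) w
      = ((w - a) * (b - w)) ^ m * ((m + 1) * ((b - w) - (w - a)) * g w
        + (w - a) * (b - w) * deriv g w) := by
  have bump : HasDerivAt (fun w => (w - a) * (b - w)) ((b - w) - (w - a)) w :=
    (((hasDerivAt_id' w).sub_const a).fun_mul ((hasDerivAt_id' w).const_sub b)).congr_deriv
      (by ring)
  rw [((bump.fun_pow (m + 1)).fun_mul hg.hasDerivAt).deriv]
  push_cast [add_tsub_cancel_right]
  ring

theorem four_mul_integral_bump_pow_succ (hab : a ≤ b)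
    (hball : ∀ t ∈ Icc a b, (t : ℂ) ∈ Metric.ball 0 R)
    (hΛ : DifferentiableOn ℂ Λ (Metric.ball 0 R)) (hW : ContinuousOn W (Icc a b)) (hp : p ≠ 0)
    (hWΛ : IsIntegratedWave Λ p W a b) (m : ℕ) {g : ℂ → ℂ}
    (hg : DifferentiableOn ℂ g (Metric.ball 0 R)) {z : ℝ × ℝ} (hz : z ∈ charTriangle) :
    4 * ∫ t in a..b, ((t - a) * (b - t) : ℂ) ^ (m + 1) * g t * W t z
      = charIntegral (fun w => ∫ t in a..b, ((t - a) * (b - t) : ℂ) ^ m *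
        ((t - a) * (b - t) * (Λ t w * g t + -p * deriv g t)
          - p * ((m + 1) * ((b - t) - (t - a)) * g t)) * W t w) z := by
  rw [four_mul_integral_mul_eq_charIntegral hab hball hΛ hW hp hWΛ
    (φ := fun w => ((w - a) * (b - w)) ^ (m + 1) * g w) (by fun_prop) (by simp) (by simp) hz]
  congr 1 with w
  refine integral_congr fun t ht => ?_
  rw [uIcc_of_le hab] at ht
  simp only [deriv_bump_pow_mul m
    (hg.differentiableAt (Metric.isOpen_ball.mem_nhds (hball t ht))) (a : ℂ) (b : ℂ)]
  ring

theorem norm_integral_mul_le (ha : 0 ≤ a) (hab : a ≤ b) (hbR : b < R)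
    (hN : ∀ t ∈ Icc a b, ‖W t‖ ≤ N) {k : ℕ} {g : ℂ → ℂ} {B : ℝ}
    (hB : ∀ w ∈ Metric.ball 0 R, ‖g w‖ ≤ B / (R - ‖w‖) ^ k) (z : ℝ × ℝ) :
    ‖∫ t in a..b, g t * W t z‖ ≤ N * (b - a) * B / (R - b) ^ k := by
  have norm_time : ∀ t ∈ Icc a b, ‖(t : ℂ)‖ ≤ b := fun t ht => by
    simpa [abs_of_nonneg (ha.trans ht.1)] using ht.2
  have hball : ∀ t ∈ Icc a b, (t : ℂ) ∈ Metric.ball 0 R := fun t ht =>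
    mem_ball_zero_iff.2 ((norm_time t ht).trans_lt hbR)
  have : 0 < R - b := sub_pos.2 hbR
  have hB₀ : 0 ≤ B := by
    have := (norm_nonneg _).trans (hB b (hball b (right_mem_Icc.2 hab)))
    rwa [Complex.norm_of_nonneg (ha.trans hab), le_div_iff₀ (by positivity), zero_mul] at this
  have bound : ∀ t ∈ Icc a b, ‖g t * W t z‖ ≤ B / (R - b) ^ k * N := fun t ht => by
    rw [norm_mul]
    have hN₀ := ((W t).norm_coe_le_norm z).trans (hN t ht)
    gcongr
    refine (hB t (hball t ht)).trans ?_
    gcongr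
    exact norm_time t ht
  calc ‖∫ t in a..b, g t * W t z‖ ≤ B / (R - b) ^ k * N * |b - a| :=
        norm_integral_le_of_norm_le_const fun t ht =>
          bound t (Ioc_subset_Icc_self (uIoc_of_le hab ▸ ht))
    _ = N * (b - a) * B / (R - b) ^ k := by rw [abs_of_nonneg (sub_nonneg.2 hab)]; ring

theorem norm_integral_pow_mul_le (hR : R ≤ 1) (ha : 0 ≤ a) (hab : a ≤ b) (hbR : b < R)
    (hΛ : DifferentiableOn ℂ Λ (Metric.ball 0 R)) (hC : ∀ ζ ∈ Metric.ball 0 R, ‖Λ ζ‖ ≤ C)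
    (hW : ContinuousOn W (Icc a b)) (hN : ∀ t ∈ Icc a b, ‖W t‖ ≤ N) (hp : p ≠ 0)
    (hWΛ : IsIntegratedWave Λ p W a b) {m k n : ℕ} (hn : m + k ≤ n) {g : ℂ → ℂ} {B : ℝ}
    (hg : DifferentiableOn ℂ g (Metric.ball 0 R))
    (hB : ∀ w ∈ Metric.ball 0 R, ‖g w‖ ≤ B / (R - ‖w‖) ^ k) {z : ℝ × ℝ} (hz : z ∈ charTriangle) :
    ‖∫ t in a..b, ((t - a) * (b - t) : ℂ) ^ m * g t * W t z‖
      ≤ N * (b - a) * B / (R - b) ^ (m + k) * ((C + 4 * ‖p‖) * n) ^ m / m.factorial ^ 2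
        * (z.1 * z.2) ^ m := by
  have hball : ∀ t ∈ Icc a b, (t : ℂ) ∈ Metric.ball 0 R := fun t ht => by
    simpa [abs_of_nonneg (ha.trans ht.1)] using ht.2.trans_lt hbR
  have hd : 0 < R - b := sub_pos.2 hbR
  induction m generalizing k g B z with
  | zero =>
    simpa using norm_integral_mul_le ha hab hbR hN hB z
  | succ m ih =>
    have hg' := hg.deriv Metric.isOpen_ball
    have hΛw : ∀ w, DifferentiableOn ℂ (fun ζ => Λ ζ w) (Metric.ball 0 R) := fun w =>
      (BoundedContinuousFunction.evalCLM (β := ℂ) ℂ w).differentiable.comp_differentiableOn hΛ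
    have recurse : ∀ w ∈ charTriangle, ‖∫ t in a..b, ((t - a) * (b - t) : ℂ) ^ m *
        ((t - a) * (b - t) * (Λ t w * g t + -p * deriv g t)
          - p * ((m + 1) * ((b - t) - (t - a)) * g t)) * W t w‖
        ≤ N * (b - a) * (4 * (C + 4 * ‖p‖) * n * B) / (R - b) ^ (m + (k + 1))
          * ((C + 4 * ‖p‖) * n) ^ m / m.factorial ^ 2 * (w.1 * w.2) ^ m := fun w hw =>
      ih (by omega) (g := fun ζ => (ζ - a) * (b - ζ) * (Λ ζ w * g ζ + -p * deriv g ζ)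
          - p * ((m + 1) * ((b - ζ) - (ζ - a)) * g ζ)) (by have := hΛw w; fun_prop) (fun ζ hζ =>
            norm_transport_le hR hg hB (by omega) hζ (((Λ ζ).norm_coe_le_norm w).trans (hC ζ hζ))
              (norm_le_four_of_mem_ball hR ha hab hbR hζ).1
              (norm_le_four_of_mem_ball hR ha hab hbR hζ).2 p) hw
    have bound := norm_charIntegral_le recurse hz
    rw [← four_mul_integral_bump_pow_succ hab hball hΛ hW hp hWΛ m hg hz, norm_mul,
      Complex.norm_ofNat] at bound
    refine (le_div_iff₀' four_pos).2 bound |>.trans_eq ?_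
    rw [Nat.factorial_succ]
    push_cast
    field_simp
    ring

end Duality

section Peak

variable {E : Type*} [NormedAddCommGroup E] [NormedSpace ℝ E] [CompleteSpace E] {a b : ℝ}

theorem exists_pos_mul_pow_le_integral_bump_pow (hab : a < b) :
    ∃ A > 0, ∀ n : ℕ, (b - a) * A ^ n ≤ ∫ t in Icc a b, ((t - a) * (b - t)) ^ n := by
  have integrable : ∀ n : ℕ, MeasureTheory.IntegrableOn (fun t => ((t - a) * (b - t)) ^ n)
      (Icc a b) := fun n => Continuous.integrableOn_Icc (by fun_prop)
  have volume_ne : MeasureTheory.volume (Icc a b) ≠ 0 := by simpa using hab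
  refine ⟨⨍ t in Icc a b, (t - a) * (b - t), ?_, fun n => ?_⟩
  · rw [MeasureTheory.setAverage_eq, MeasureTheory.integral_Icc_eq_integral_Ioc,
      ← integral_of_le hab.le, Real.volume_real_Icc_of_le hab.le, smul_eq_mul]
    exact mul_pos (inv_pos.2 (sub_pos.2 hab)) (intervalIntegral_pos_of_pos_on
      (Continuous.intervalIntegrable (by fun_prop) _ _)
      (fun t ht => mul_pos (sub_pos.2 ht.1) (sub_pos.2 ht.2)) hab)
  · have jensen := (convexOn_pow n).map_set_average_le (continuous_pow n).continuousOn isClosed_Ici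
      volume_ne (by simp) (MeasureTheory.ae_restrict_of_forall_mem measurableSet_Icc fun t ht =>
        mul_nonneg (sub_nonneg.2 ht.1) (sub_nonneg.2 ht.2))
      (by simpa using integrable 1) (integrable n)
    rwa [MeasureTheory.setAverage_eq _ fun t => ((t - a) * (b - t)) ^ n, smul_eq_mul,
      Real.volume_real_Icc_of_le hab.le, le_inv_mul_iff₀ (sub_pos.2 hab)] at jensen

/-- The powers of `(t - a) * (b - t)` concentrate at the midpoint and their integrals decay at
most geometrically. -/
theorem eq_zero_of_norm_integral_bump_pow_smul_le (hab : a < b) {g : ℝ → E}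
    (hg : ContinuousOn g (Icc a b)) {K D : ℝ}
    (hK : ∀ n : ℕ, ‖∫ t in a..b, ((t - a) * (b - t)) ^ n • g t‖ ≤ K * D ^ n / n.factorial) :
    g ((a + b) / 2) = 0 := by
  have peak := tendsto_setIntegral_pow_smul_of_unique_maximum_of_isCompact_of_continuousOn
    (μ := MeasureTheory.volume) (x₀ := (a + b) / 2) isCompact_Icc
    (c := fun t : ℝ => (t - a) * (b - t)) (by fun_prop)
    (fun t _ ht => by nlinarith [sq_pos_of_ne_zero (sub_ne_zero.2 ht)])
    (fun t ht => mul_nonneg (sub_nonneg.2 ht.1) (sub_nonneg.2 ht.2))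
    (mul_pos (by linarith) (by linarith))
    (subset_closure (by rw [interior_Icc]; constructor <;> linarith)) hg
  obtain ⟨A, hA, lower⟩ := exists_pos_mul_pow_le_integral_bump_pow hab
  have hd : 0 < b - a := sub_pos.2 hab
  have decay : Filter.Tendsto (fun n : ℕ => K / (b - a) * ((D / A) ^ n / n.factorial)) Filter.atTop
      (nhds 0) := by
    simpa using (FloorSemiring.tendsto_pow_div_factorial_atTop (D / A)).const_mul (K / (b - a))
  refine tendsto_nhds_unique peak (squeeze_zero_norm (fun n => ?_) decay)
  have := (norm_nonneg _).trans (hK n)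
  rw [norm_smul, norm_inv, Real.norm_of_nonneg (le_trans (by positivity) (lower n)),
    MeasureTheory.integral_Icc_eq_integral_Ioc (f := fun t => ((t - a) * (b - t)) ^ n • g t),
    ← integral_of_le hab.le]
  calc (∫ t in Icc a b, ((t - a) * (b - t)) ^ n)⁻¹ * ‖∫ t in a..b, ((t - a) * (b - t)) ^ n • g t‖
      ≤ ((b - a) * A ^ n)⁻¹ * (K * D ^ n / n.factorial) := by
        gcongr
        exacts [lower n, hK n]
    _ = K / (b - a) * ((D / A) ^ n / n.factorial) := by
        rw [div_pow]
        field_simp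

end Peak

section Vanishing

variable {Λ : ℂ → ℝ × ℝ →ᵇ ℂ} {W : ℝ → ℝ × ℝ →ᵇ ℂ} {p : ℂ} {a b R C : ℝ}

theorem IsIntegratedWave.eq_zero_midpoint (hWΛ : IsIntegratedWave Λ p W a b) (hR : R ≤ 1)
    (ha : 0 ≤ a) (hab : a < b) (hbR : b < R) (hΛ : DifferentiableOn ℂ Λ (Metric.ball 0 R))
    (hC : ∀ ζ ∈ Metric.ball 0 R, ‖Λ ζ‖ ≤ C) (hW : ContinuousOn W (Icc a b)) (hp : p ≠ 0)
    {z : ℝ × ℝ} (hz : z ∈ charTriangle) : W ((a + b) / 2) z = 0 := by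
  obtain ⟨N, hN⟩ := isCompact_Icc.exists_bound_of_continuousOn hW
  have hd : 0 < R - b := sub_pos.2 hbR
  have hC₀ : 0 ≤ C :=
    (norm_nonneg _).trans (hC 0 (Metric.mem_ball_self ((ha.trans hab.le).trans_lt hbR)))
  have hN₀ : 0 ≤ N := (norm_nonneg _).trans (hN a (left_mem_Icc.2 hab.le))
  refine eq_zero_of_norm_integral_bump_pow_smul_le hab (g := fun t => W t z)
    (K := N * (b - a)) (D := Real.exp 1 * (C + 4 * ‖p‖) / (R - b))
    ((BoundedContinuousFunction.evalCLM (β := ℂ) ℂ z).continuous.comp_continuousOn hW) fun n => ?_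
  have bound := norm_integral_pow_mul_le hR ha hab.le hbR hΛ hC hW hN hp hWΛ (m := n) (k := 0)
    (n := n) le_rfl (g := fun _ => 1) (B := 1) (by fun_prop) (by simp) hz
  have self_pow_le : (n : ℝ) ^ n ≤ Real.exp 1 ^ n * n.factorial := by
    rw [← div_le_iff₀ (by positivity), ← Real.exp_nat_mul, mul_one]
    exact Real.pow_div_factorial_le_exp _ n.cast_nonneg n
  have area_pow_le : (z.1 * z.2) ^ n ≤ 1 := pow_le_one₀ (mul_nonneg_of_mem_charTriangle hz)
    (mul_le_one_of_mem_charTriangle hz)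
  have area_nonneg := mul_nonneg_of_mem_charTriangle hz
  have : 0 ≤ b - a := sub_nonneg.2 hab.le
  calc ‖∫ t in a..b, ((t - a) * (b - t)) ^ n • W t z‖
      = ‖∫ t in a..b, ((t - a) * (b - t) : ℂ) ^ n * 1 * W t z‖ := by
        simp only [Complex.real_smul, mul_one]
        push_cast
        rfl
    _ ≤ N * (b - a) * 1 / (R - b) ^ (n + 0) * ((C + 4 * ‖p‖) * n) ^ n / n.factorial ^ 2
          * (z.1 * z.2) ^ n := bound
    _ ≤ N * (b - a) / (R - b) ^ n * ((C + 4 * ‖p‖) ^ n * (Real.exp 1 ^ n * n.factorial))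
          / n.factorial ^ 2 * 1 := by
        rw [mul_one (N * (b - a)), add_zero, mul_pow (C + 4 * ‖p‖)]
        gcongr
    _ = N * (b - a) * (Real.exp 1 * (C + 4 * ‖p‖) / (R - b)) ^ n / n.factorial := by
        rw [div_pow, mul_pow]
        field_simp

end Vanishing

section Rectangles

variable {E : Type*} [NormedAddCommGroup E] [NormedSpace ℝ E] {f : ℝ × ℝ → E} {z w : ℝ × ℝ}

theorem mem_interior_charTriangle (h₀ : 0 < z.2) (h₁ : z.2 < z.1) (h₂ : z.1 + z.2 < 2) :
    z ∈ interior charTriangle :=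
  mem_interior.2 ⟨{w | 0 < w.2} ∩ ({w | w.2 < w.1} ∩ {w | w.1 + w.2 < 2}),
    fun _ hw => ⟨hw.1.le, hw.2.1.le, hw.2.2.le⟩,
    (isOpen_lt continuous_const continuous_snd).inter
      ((isOpen_lt continuous_snd continuous_fst).inter
        (isOpen_lt (continuous_fst.add continuous_snd) continuous_const)), h₀, h₁, h₂⟩

theorem nonempty_interior_charTriangle : (interior charTriangle).Nonempty :=
  ⟨(1, 1 / 2), mem_interior_charTriangle (by norm_num) (by norm_num) (by norm_num)⟩

theorem closure_interior_charTriangle : closure (interior charTriangle) = charTriangle := by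
  rw [convex_charTriangle.closure_interior_eq_closure_of_nonempty_interior
    nonempty_interior_charTriangle, isCompact_charTriangle.isClosed.closure_eq]

theorem mem_interior_of_rectangle_subset (hzw : uIcc z.1 w.1 ×ˢ uIcc z.2 w.2 ⊆ charTriangle)
    {s τ : ℝ} (hs : s ∈ uIcc z.1 w.1) (hτ : τ ∈ Ioo (min z.2 w.2) (max z.2 w.2)) :
    (s, τ) ∈ interior charTriangle := by
  obtain ⟨bottom, -, -⟩ := hzw (mk_mem_prod hs (left_mem_Icc.2 min_le_max))
  obtain ⟨-, top, right⟩ := hzw (mk_mem_prod hs (right_mem_Icc.2 min_le_max))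
  exact mem_interior_charTriangle (bottom.trans_lt hτ.1) (hτ.2.trans_le top)
    (lt_of_lt_of_le (by simpa using hτ.2) right)

theorem exists_extension_mixedDeriv (hf : ContDiffOn ℝ 2 f charTriangle) :
    ∃ M : ℝ × ℝ →ᵇ E, ∀ z ∈ interior charTriangle, M z = mixedDeriv f z := by
  have unique := uniqueDiffOn_convex convex_charTriangle nonempty_interior_charTriangle
  have cont : ContinuousOn (fun z => iteratedFDerivWithin ℝ 2 f charTriangle z
      ![(1, 0), (0, 1)]) charTriangle :=
    (ContinuousMultilinearMap.apply ℝ (fun _ => ℝ × ℝ) E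
      ![(1, 0), (0, 1)]).continuous.comp_continuousOn
        (hf.continuousOn_iteratedFDerivWithin le_rfl unique)
  refine ⟨triangleExtend _ cont, fun z hz => ?_⟩
  rw [triangleExtend_apply_of_mem cont (interior_subset hz), iteratedFDerivWithin_eq_iteratedFDeriv
    unique (hf.contDiffAt (mem_interior_iff_mem_nhds.1 hz)) (interior_subset hz),
    iteratedFDeriv_two_apply]
  rfl

/-- The second difference of `f` over the rectangle with opposite corners `z` and `w`. -/
def rectDiff (f : ℝ × ℝ → E) (z w : ℝ × ℝ) : E :=
  f w - f (z.1, w.2) - (f (w.1, z.2) - f z)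

theorem integral_integral_mixedDeriv [CompleteSpace E] (hf : ContDiffOn ℝ 2 f charTriangle)
    {M : ℝ × ℝ → E} (cM : Continuous M) (hM : ∀ z ∈ interior charTriangle, M z = mixedDeriv f z)
    (hzw : uIcc z.1 w.1 ×ˢ uIcc z.2 w.2 ⊆ charTriangle) :
    ∫ τ in z.2..w.2, ∫ s in z.1..w.1, M (s, τ) = rectDiff f z w := by
  have contDiffAt : ∀ v ∈ interior charTriangle, ContDiffAt ℝ 2 f v := fun v hv =>
    hf.contDiffAt (mem_interior_iff_mem_nhds.1 hv)
  have inner : ∀ τ ∈ Ioo (min z.2 w.2) (max z.2 w.2), ∫ s in z.1..w.1, M (s, τ)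
      = fderiv ℝ f (w.1, τ) (0, 1) - fderiv ℝ f (z.1, τ) (0, 1) := fun τ hτ =>
    integral_eq_sub_of_hasDerivAt (f := fun s => fderiv ℝ f (s, τ) (0, 1)) (fun s hs => by
      have hsτ := mem_interior_of_rectangle_subset hzw hs hτ
      rw [hM _ hsτ]
      exact hasDerivAt_fderiv_apply_snd (contDiffAt _ hsτ))
      ((cM.comp (Continuous.prodMk_left τ)).intervalIntegrable _ _)
  have vertical : ∀ s ∈ uIcc z.1 w.1, ContinuousOn (fun τ => f (s, τ)) (uIcc z.2 w.2) :=
    fun s hs => hf.continuousOn.comp (by fun_prop) fun τ hτ => hzw (mk_mem_prod hs hτ)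
  have vertical_deriv : ∀ s ∈ uIcc z.1 w.1, ∀ τ ∈ Ioo (min z.2 w.2) (max z.2 w.2),
      HasDerivAt (fun τ => f (s, τ)) (fderiv ℝ f (s, τ) (0, 1)) τ := fun s hs τ hτ =>
    (hasDerivAt_partials_of_hasFDerivAt ((contDiffAt _ (mem_interior_of_rectangle_subset hzw hs
      hτ)).differentiableAt two_ne_zero).hasFDerivAt).2
  exact integral_eq_sub_of_hasDeriv_right (f := fun τ => f (w.1, τ) - f (z.1, τ))
    ((vertical _ right_mem_uIcc).sub (vertical _ left_mem_uIcc)) (fun τ hτ => by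
      rw [inner τ hτ]
      exact ((vertical_deriv _ right_mem_uIcc τ hτ).sub
        (vertical_deriv _ left_mem_uIcc τ hτ)).hasDerivWithinAt)
    ((continuous_parametric_intervalIntegral_of_continuous' (by fun_prop) _ _).intervalIntegrable
      _ _)

theorem exists_norm_rectDiff_le [CompleteSpace E] (hf : ContDiffOn ℝ 2 f charTriangle) :
    ∃ N : ℝ, ∀ z w : ℝ × ℝ, uIcc z.1 w.1 ×ˢ uIcc z.2 w.2 ⊆ charTriangle →
      ‖rectDiff f z w‖ ≤ N * (|w.1 - z.1| * |w.2 - z.2|) := by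
  obtain ⟨M, hM⟩ := exists_extension_mixedDeriv hf
  refine ⟨‖M‖, fun z w hzw => ?_⟩
  rw [← integral_integral_mixedDeriv hf M.continuous hM hzw, ← mul_assoc]
  exact norm_integral_le_of_norm_le_const fun τ _ =>
    norm_integral_le_of_norm_le_const fun s _ => M.norm_coe_le_norm _

theorem norm_mixedDeriv_le_of_norm_rectDiff_le (hf : ContDiffOn ℝ 2 f charTriangle) {N : ℝ}
    (hN₀ : 0 ≤ N) (hN : ∀ z w : ℝ × ℝ, uIcc z.1 w.1 ×ˢ uIcc z.2 w.2 ⊆ charTriangle →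
      ‖rectDiff f z w‖ ≤ N * (|w.1 - z.1| * |w.2 - z.2|))
    (hz : z ∈ interior charTriangle) : ‖mixedDeriv f z‖ ≤ N := by
  have contDiffAt : ∀ v ∈ interior charTriangle, ContDiffAt ℝ 2 f v := fun v hv =>
    hf.contDiffAt (mem_interior_iff_mem_nhds.1 hv)
  obtain ⟨ε, hε, ball_subset⟩ := Metric.isOpen_iff.1 isOpen_interior z hz
  replace ball_subset : Metric.ball z.1 ε ×ˢ Metric.ball z.2 ε ⊆ interior charTriangle := by
    rwa [ball_prod_same]
  have uIcc_subset_ball : ∀ {c r : ℝ}, r ∈ Metric.ball c ε → uIcc c r ⊆ Metric.ball c ε :=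
    fun hr => (convex_ball _ ε).ordConnected.uIcc_subset (Metric.mem_ball_self hε) hr
  have snd_partial : ∀ s ∈ Metric.ball z.1 ε, HasDerivAt (fun τ => f (s, τ))
      (fderiv ℝ f (s, z.2) (0, 1)) z.2 := fun s hs =>
    (hasDerivAt_partials_of_hasFDerivAt (z := (s, z.2)) ((contDiffAt (s, z.2) (ball_subset
      (mk_mem_prod hs (Metric.mem_ball_self hε)))).differentiableAt two_ne_zero).hasFDerivAt).2
  refine (hasDerivAt_fderiv_apply_snd (contDiffAt z hz)).le_of_lip' hN₀
    (Filter.mem_of_superset (Metric.ball_mem_nhds _ hε) fun s hs => ?_)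
  refine ((snd_partial s hs).sub (snd_partial z.1 (Metric.mem_ball_self hε))).le_of_lip'
    (by positivity) (Filter.mem_of_superset (Metric.ball_mem_nhds _ hε) fun τ hτ => ?_)
  have := hN z (s, τ) ((prod_mono (uIcc_subset_ball hs) (uIcc_subset_ball hτ)).trans
    (ball_subset.trans interior_subset))
  rwa [← mul_assoc] at this

theorem charIntegral_mixedDeriv [CompleteSpace E] (hf : ContDiffOn ℝ 2 f charTriangle)
    (diagonal : ∀ s, (s, s) ∈ charTriangle → f (s, s) = 0)
    (axis : ∀ s, (s, 0) ∈ charTriangle → f (s, 0) = 0)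
    {M : ℝ × ℝ → E} (cM : Continuous M) (hM : ∀ z ∈ interior charTriangle, M z = mixedDeriv f z)
    (hz : z ∈ charTriangle) : charIntegral M z = f z := by
  obtain ⟨h₀, h₁, h₂⟩ := hz
  rw [charIntegral, integral_integral_mixedDeriv (z := (z.2, 0)) (w := z) hf cM hM, rectDiff,
    diagonal, axis, axis]
  · simp
  · exact ⟨le_rfl, h₀, by simp only; linarith⟩
  · exact ⟨le_rfl, h₀.trans h₁, by simp only; linarith⟩
  · exact ⟨h₀, le_rfl, by simp only; linarith⟩
  · rw [uIcc_of_le h₀, uIcc_of_le h₁]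
    exact rectangle_subset_charTriangle ⟨h₀, h₁, h₂⟩

end Rectangles

section TimeRegularity

/-- Osgood's theorem, a consequence of Baire's category theorem. -/
theorem exists_Icc_forall_norm_le_of_pointwise_bounded {ι E : Type*} [NormedAddCommGroup E]
    {S : Set ι} {f : ι → ℝ → E} {weight : ι → ℝ} (hweight : ∀ i ∈ S, 0 ≤ weight i) {a b : ℝ}
    (hab : a < b) (hf : ∀ i ∈ S, ContinuousOn (f i) (Icc a b))
    (hbound : ∀ t ∈ Icc a b, ∃ N : ℝ, ∀ i ∈ S, ‖f i t‖ ≤ N * weight i) :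
    ∃ a' b', a ≤ a' ∧ a' < b' ∧ b' ≤ b ∧
      ∃ N : ℝ, 0 ≤ N ∧ ∀ t ∈ Icc a' b', ∀ i ∈ S, ‖f i t‖ ≤ N * weight i := by
  let sublevel (N : ℕ) : Set ℝ :=
    (Ioo a b)ᶜ ∪ (Icc a b ∩ ⋂ i ∈ S, {t ∈ Icc a b | ‖f i t‖ ≤ N * weight i})
  have closed : ∀ N, IsClosed (sublevel N) := fun N => isOpen_Ioo.isClosed_compl.union
    (isClosed_Icc.inter (isClosed_biInter fun i hi =>
      isClosed_Icc.isClosed_le (hf i hi).norm continuousOn_const))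
  have cover : ⋃ N, sublevel N = univ := by
    refine eq_univ_of_forall fun t => mem_iUnion.2 ?_
    by_cases ht : t ∈ Ioo a b
    · obtain ⟨N, hN⟩ := hbound t (Ioo_subset_Icc_self ht)
      obtain ⟨n, hn⟩ := exists_nat_ge N
      exact ⟨n, .inr ⟨Ioo_subset_Icc_self ht, mem_iInter₂.2 fun i hi => ⟨Ioo_subset_Icc_self ht,
        (hN i hi).trans (mul_le_mul_of_nonneg_right hn (hweight i hi))⟩⟩⟩
    · exact ⟨0, .inl ht⟩
  obtain ⟨t, ht, htN⟩ := (dense_iUnion_interior_of_closed closed cover).inter_open_nonempty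
    (Ioo a b) isOpen_Ioo (nonempty_Ioo.2 hab)
  obtain ⟨N, hN⟩ := mem_iUnion.1 htN
  obtain ⟨a', b', -, hnhds, hsub⟩ := exists_Icc_mem_subset_of_mem_nhds
    (Filter.inter_mem (isOpen_Ioo.mem_nhds ht) (mem_interior_iff_mem_nhds.1 hN))
  have ht' := Icc_mem_nhds_iff.1 hnhds
  have hab' : a' < b' := ht'.1.trans ht'.2
  refine ⟨a', b', (hsub (left_mem_Icc.2 hab'.le)).1.1.le, hab',
    (hsub (right_mem_Icc.2 hab'.le)).1.2.le, N, N.cast_nonneg, fun r hr i hi => ?_⟩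
  obtain ⟨hr₁, hr₂ | hr₂⟩ := hsub hr
  · exact absurd hr₁ hr₂
  · exact (mem_iInter₂.1 hr₂.2 i hi).2

theorem hasDerivAt_intervalIntegral_of_lipschitzOnWith {E : Type*} [NormedAddCommGroup E]
    [NormedSpace ℝ E] {F : ℝ → ℝ → E} {F' : ℝ → E} {S : Set ℝ} {x a b : ℝ} {L : NNReal}
    (hS : S ∈ nhds x) (hF : ∀ x, Continuous (F x)) (hF' : Continuous F')
    (hL : ∀ y, LipschitzOnWith L (fun x => F x y) S)
    (hd : ∀ᵐ y, y ∈ uIoc a b → HasDerivAt (fun x => F x y) (F' y) x) :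
    HasDerivAt (fun x => ∫ y in a..b, F x y) (∫ y in a..b, F' y) x :=
  (intervalIntegral.hasDerivAt_integral_of_dominated_loc_of_lip (bound := fun _ => (L : ℝ)) hS
    (.of_forall fun x => (hF x).aestronglyMeasurable) ((hF x).intervalIntegrable _ _)
    hF'.aestronglyMeasurable (.of_forall fun y _ => by simpa using hL y) intervalIntegrable_const
    hd).2

theorem hasDerivAt_charIntegral {W : ℝ → ℝ × ℝ →ᵇ ℂ} {D : ℝ × ℝ →ᵇ ℂ} {S : Set ℝ} {t : ℝ}
    {L : NNReal} (hS : S ∈ nhds t) (hL : LipschitzOnWith L W S)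
    (hD : ∀ w ∈ interior charTriangle, HasDerivAt (fun t => W t w) (D w) t) {z : ℝ × ℝ}
    (hz : z ∈ charTriangle) :
    HasDerivAt (fun t => charIntegral (W t) z) (charIntegral D z) t := by
  obtain ⟨h₀, h₁, h₂⟩ := hz
  have lipschitz : ∀ w, LipschitzOnWith L (fun t => W t w) S := fun w => by
    simpa [Function.comp_def] using
      (BoundedContinuousFunction.lipschitz_eval_const w).comp_lipschitzOnWith hL
  have inner_lipschitz : ∀ τ, LipschitzOnWith (L * Real.nnabs (z.1 - z.2))
      (fun t => ∫ s in z.2..z.1, W t (s, τ)) S := fun τ =>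
    LipschitzOnWith.of_dist_le_mul fun t ht t' ht' => by
      have slice : ∀ t, IntervalIntegrable (fun s => W t (s, τ)) MeasureTheory.volume z.2 z.1 :=
        fun t => ((W t).continuous.comp (Continuous.prodMk_left τ)).intervalIntegrable _ _
      rw [dist_eq_norm, ← integral_sub (slice t) (slice t')]
      refine (norm_integral_le_of_norm_le_const fun s _ => ?_).trans_eq
        (mul_right_comm (L : ℝ) (dist t t') |z.1 - z.2|)
      simpa [dist_eq_norm] using (lipschitz (s, τ)).dist_le_mul t ht t' ht'
  refine hasDerivAt_intervalIntegral_of_lipschitzOnWith hS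
    (fun t => continuous_parametric_intervalIntegral_of_continuous' (by fun_prop) _ _)
    (continuous_parametric_intervalIntegral_of_continuous' (by fun_prop) _ _) inner_lipschitz
    (.of_forall fun τ hτ => ?_)
  rw [uIoc_of_le h₀] at hτ
  refine hasDerivAt_intervalIntegral_of_lipschitzOnWith hS (fun t => by fun_prop) (by fun_prop)
    (fun s => lipschitz (s, τ)) ?_
  filter_upwards [MeasureTheory.Measure.ae_ne MeasureTheory.volume z.1] with s hne hs
  rw [uIoc_of_le h₁] at hs
  exact hD _ (mem_interior_charTriangle hτ.1 (hτ.2.trans_lt hs.1)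
    (by simp only; linarith [hs.2.lt_of_ne hne, hτ.2]))

end TimeRegularity

section CharWave

/-- Solutions of `4 ∂₁∂₂Q = Λ Q + p ∂ₜQ` on the triangle with zero data on the axis and on the
diagonal, with only separate regularity in space and time: the difference of two kernels in the
characteristic coordinates. -/
structure IsCharWave (Λ : ℂ → ℝ × ℝ →ᵇ ℂ) (p : ℂ) (I : Set ℝ) (Q : ℝ → ℝ × ℝ → ℂ) : Prop where
  contDiffOn : ∀ t ∈ I, ContDiffOn ℝ 2 (Q t) charTriangle
  differentiableAt : ∀ z ∈ charTriangle, ∀ t ∈ I, DifferentiableAt ℝ (fun t => Q t z) t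
  equation : ∀ t ∈ I, ∀ z ∈ interior charTriangle,
    4 * mixedDeriv (Q t) z = Λ t z * Q t z + p * deriv (fun t => Q t z) t
  diagonal : ∀ t ∈ I, ∀ s, (s, s) ∈ charTriangle → Q t (s, s) = 0
  axis : ∀ t ∈ I, ∀ s, (s, 0) ∈ charTriangle → Q t (s, 0) = 0

variable {Λ : ℂ → ℝ × ℝ →ᵇ ℂ} {p : ℂ} {I : Set ℝ} {Q : ℝ → ℝ × ℝ → ℂ} {a b N C L : ℝ}

namespace IsCharWave

theorem exists_Icc_norm_rectDiff_le (h : IsCharWave Λ p I Q) (hab : a < b) (hI : Icc a b ⊆ I) :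
    ∃ a' b', a ≤ a' ∧ a' < b' ∧ b' ≤ b ∧ ∃ N : ℝ, 0 ≤ N ∧ ∀ t ∈ Icc a' b', ∀ z w : ℝ × ℝ,
      uIcc z.1 w.1 ×ˢ uIcc z.2 w.2 ⊆ charTriangle →
        ‖rectDiff (Q t) z w‖ ≤ N * (|w.1 - z.1| * |w.2 - z.2|) := by
  let rectangles : Set ((ℝ × ℝ) × ℝ × ℝ) :=
    {q | uIcc q.1.1 q.2.1 ×ˢ uIcc q.1.2 q.2.2 ⊆ charTriangle}
  have continuousOn : ∀ q ∈ rectangles,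
      ContinuousOn (fun t => rectDiff (Q t) q.1 q.2) (Icc a b) := fun q hq => by
    have corner : ∀ v ∈ uIcc q.1.1 q.2.1 ×ˢ uIcc q.1.2 q.2.2,
        ContinuousOn (fun t => Q t v) (Icc a b) := fun v hv t ht =>
      (h.differentiableAt v (hq hv) t (hI ht)).continuousAt.continuousWithinAt
    exact ((corner q.2 ⟨right_mem_uIcc, right_mem_uIcc⟩).sub
      (corner (q.1.1, q.2.2) ⟨left_mem_uIcc, right_mem_uIcc⟩)).sub
      ((corner (q.2.1, q.1.2) ⟨right_mem_uIcc, left_mem_uIcc⟩).sub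
        (corner q.1 ⟨left_mem_uIcc, left_mem_uIcc⟩))
  obtain ⟨a', b', ha, hab', hb, N, hN₀, hN⟩ := exists_Icc_forall_norm_le_of_pointwise_bounded
    (weight := fun q => |q.2.1 - q.1.1| * |q.2.2 - q.1.2|) (fun q _ => by positivity) hab
    continuousOn fun t ht => (exists_norm_rectDiff_le (h.contDiffOn t (hI ht))).imp
      fun N hN q hq => hN q.1 q.2 hq
  exact ⟨a', b', ha, hab', hb, N, hN₀, fun t ht z w hzw => hN t ht (z, w) hzw⟩

theorem norm_le_of_norm_mixedDeriv_le (h : IsCharWave Λ p I Q) {t : ℝ} (ht : t ∈ I)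
    (hN₀ : 0 ≤ N) (hN : ∀ z ∈ interior charTriangle, ‖mixedDeriv (Q t) z‖ ≤ N) {z : ℝ × ℝ}
    (hz : z ∈ charTriangle) : ‖Q t z‖ ≤ N := by
  obtain ⟨M, hM⟩ := exists_extension_mixedDeriv (h.contDiffOn t ht)
  have hMN : ∀ w ∈ charTriangle, ‖M w‖ ≤ N := fun w hw =>
    le_on_closure (fun w hw => (hM w hw).symm ▸ hN w hw) M.continuous.norm.continuousOn
      continuousOn_const (closure_interior_charTriangle.symm ▸ hw)
  rw [← charIntegral_mixedDeriv (h.contDiffOn t ht) (h.diagonal t ht) (h.axis t ht) M.continuous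
    hM hz]
  have := norm_charIntegral_le (m := 0) (by simpa using hMN) hz
  simp only [zero_add, pow_one, CharP.cast_eq_zero, one_pow, div_one] at this
  exact this.trans (mul_le_of_le_one_right hN₀ (mul_le_one_of_mem_charTriangle hz))

theorem norm_deriv_le (h : IsCharWave Λ p I Q) (hp : p ≠ 0) {t : ℝ} (ht : t ∈ I)
    (hC : ‖Λ t‖ ≤ C) (hN₀ : 0 ≤ N) (hN : ∀ z ∈ interior charTriangle, ‖mixedDeriv (Q t) z‖ ≤ N)
    {z : ℝ × ℝ} (hz : z ∈ interior charTriangle) :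
    ‖deriv (fun t => Q t z) t‖ ≤ ‖p‖⁻¹ * (4 * N + C * N) := by
  have solved : deriv (fun t => Q t z) t = p⁻¹ * (4 * mixedDeriv (Q t) z - Λ t z * Q t z) := by
    rw [h.equation t ht z hz]
    field_simp
    ring
  have hQ := h.norm_le_of_norm_mixedDeriv_le ht hN₀ hN (interior_subset hz)
  have hC₀ := (norm_nonneg _).trans hC
  rw [solved, norm_mul, norm_inv]
  gcongr
  refine (norm_sub_le _ _).trans ?_
  rw [norm_mul, norm_mul, Complex.norm_ofNat]
  gcongr
  exacts [hN z hz, ((Λ t).norm_coe_le_norm z).trans hC]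

theorem norm_sub_le_of_norm_deriv_le (h : IsCharWave Λ p I Q) (hI : Icc a b ⊆ I)
    (hL : ∀ t ∈ Icc a b, ∀ z ∈ interior charTriangle, ‖deriv (fun t => Q t z) t‖ ≤ L) {t t' : ℝ}
    (ht : t ∈ Icc a b) (ht' : t' ∈ Icc a b) {z : ℝ × ℝ} (hz : z ∈ charTriangle) :
    ‖Q t z - Q t' z‖ ≤ L * ‖t - t'‖ := by
  have continuousOn : ∀ t ∈ Icc a b, ContinuousOn (Q t) (closure (interior charTriangle)) :=
    fun t ht => closure_interior_charTriangle.symm ▸ (h.contDiffOn t (hI ht)).continuousOn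
  exact le_on_closure (fun w hw => (convex_Icc a b).norm_image_sub_le_of_norm_deriv_le
      (fun t ht => h.differentiableAt w (interior_subset hw) t (hI ht)) (fun t ht => hL t ht w hw)
      ht' ht)
    ((continuousOn t ht).sub (continuousOn t' ht')).norm continuousOn_const
    (closure_interior_charTriangle.symm ▸ hz)

theorem hasDerivAt_charIntegralCLM (h : IsCharWave Λ p I Q) (hp : p ≠ 0) {W : ℝ → ℝ × ℝ →ᵇ ℂ}
    {S : Set ℝ} {t : ℝ} {L : NNReal} (hS : S ∈ nhds t) (hL : LipschitzOnWith L W S) (hSI : S ⊆ I)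
    (hW : ∀ t ∈ S, EqOn (W t) (Q t) charTriangle) {z : ℝ × ℝ} (hz : z ∈ charTriangle) :
    HasDerivAt (fun t => charIntegralCLM (W t) z)
      (p⁻¹ * (4 * W t z - charIntegralCLM (Λ t * W t) z)) t := by
  have htS := mem_of_mem_nhds hS
  have ht := hSI htS
  obtain ⟨M, hM⟩ := exists_extension_mixedDeriv (h.contDiffOn t ht)
  have integral_M : charIntegralCLM M z = W t z := by
    rw [charIntegralCLM_apply_of_mem M hz, charIntegral_mixedDeriv (h.contDiffOn t ht)
      (h.diagonal t ht) (h.axis t ht) M.continuous hM hz, hW t htS hz]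
  have time_deriv : ∀ w ∈ interior charTriangle,
      HasDerivAt (fun t => W t w) ((p⁻¹ • ((4 : ℂ) • M - Λ t * W t)) w) t := fun w hw => by
    have hw' := interior_subset hw
    refine ((h.differentiableAt w hw' t ht).hasDerivAt.congr_of_eventuallyEq
      (Filter.mem_of_superset hS fun t ht => hW t ht hw')).congr_deriv ?_
    simp only [BoundedContinuousFunction.coe_smul, BoundedContinuousFunction.coe_sub,
      BoundedContinuousFunction.coe_mul, Pi.sub_apply, Pi.mul_apply, smul_eq_mul, hM w hw,
      h.equation t ht w hw, hW t htS hw']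
    field_simp
    ring
  simp only [charIntegralCLM_apply_of_mem (W _) hz]
  refine (hasDerivAt_charIntegral hS hL time_deriv hz).congr_deriv ?_
  rw [← charIntegralCLM_apply_of_mem _ hz, map_smul, map_sub, map_smul]
  simp [integral_M]

theorem exists_isIntegratedWave (h : IsCharWave Λ p I Q) (hp : p ≠ 0) (hab : a < b)
    (hI : Icc a b ⊆ I) (hC : ∀ t ∈ Icc a b, ‖Λ t‖ ≤ C) :
    ∃ (a' b' : ℝ) (W : ℝ → ℝ × ℝ →ᵇ ℂ), a ≤ a' ∧ a' < b' ∧ b' ≤ b ∧ ContinuousOn W (Icc a' b') ∧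
      (∀ t ∈ Icc a' b', EqOn (W t) (Q t) charTriangle) ∧ IsIntegratedWave Λ p W a' b' := by
  obtain ⟨a', b', ha, hab', hb, N, hN₀, hN⟩ := h.exists_Icc_norm_rectDiff_le hab hI
  have hsub : Icc a' b' ⊆ Icc a b := Icc_subset_Icc ha hb
  have hI' := hsub.trans hI
  have deriv_le : ∀ t ∈ Icc a' b', ∀ z ∈ interior charTriangle,
      ‖deriv (fun t => Q t z) t‖ ≤ ‖p‖⁻¹ * (4 * N + C * N) := fun t ht z hz =>
    h.norm_deriv_le hp (hI' ht) (hC t (hsub ht)) hN₀ (fun w hw =>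
      norm_mixedDeriv_le_of_norm_rectDiff_le (h.contDiffOn t (hI' ht)) hN₀ (hN t ht) hw) hz
  have extend : ∀ t ∈ Icc a' b', ∃ F : ℝ × ℝ →ᵇ ℂ, ∀ z, F z = Q t (charRetract z) := fun t ht =>
    ⟨_, triangleExtend_apply (h.contDiffOn t (hI' ht)).continuousOn⟩
  choose! W hW using extend
  have eqOn : ∀ t ∈ Icc a' b', EqOn (W t) (Q t) charTriangle := fun t ht z hz => by
    rw [hW t ht, charRetract_of_mem hz]
  have hL₀ : 0 ≤ ‖p‖⁻¹ * (4 * N + C * N) :=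
    (norm_nonneg _).trans (deriv_le a' (left_mem_Icc.2 hab'.le) _
      nonempty_interior_charTriangle.some_mem)
  have lipschitz : LipschitzOnWith ⟨_, hL₀⟩ W (Icc a' b') :=
    LipschitzOnWith.of_dist_le_mul fun t ht t' ht' =>
      (BoundedContinuousFunction.dist_le (by positivity)).2 fun z => by
        rw [dist_eq_norm, dist_eq_norm, hW t ht, hW t' ht']
        exact h.norm_sub_le_of_norm_deriv_le hI' deriv_le ht ht' (charRetract z).2
  exact ⟨a', b', W, ha, hab', hb, lipschitz.continuousOn, eqOn, fun t ht z hz =>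
    h.hasDerivAt_charIntegralCLM hp (Icc_mem_nhds ht.1 ht.2) lipschitz hI' eqOn hz⟩

theorem eq_zero {R : ℝ} (h : IsCharWave Λ p (Ioo 0 R) Q) (hp : p ≠ 0) (hR : R ≤ 1)
    (hΛ : DifferentiableOn ℂ Λ (Metric.ball 0 R))
    (hC : ∀ ζ ∈ Metric.ball 0 R, ‖Λ ζ‖ ≤ C) {t : ℝ} (ht : t ∈ Ioo 0 R) {z : ℝ × ℝ}
    (hz : z ∈ charTriangle) : Q t z = 0 := by
  by_contra hne
  obtain ⟨a, b, -, hnhds, hsub⟩ := exists_Icc_mem_subset_of_mem_nhds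
    (Filter.inter_mem (isOpen_Ioo.mem_nhds ht)
      ((h.differentiableAt z hz t ht).continuousAt.eventually_ne hne))
  have hab := Icc_mem_nhds_iff.1 hnhds
  have hI : Icc a b ⊆ Ioo 0 R := hsub.trans inter_subset_left
  have hball : ∀ s ∈ Icc a b, (s : ℂ) ∈ Metric.ball 0 R := fun s hs => by
    rw [mem_ball_zero_iff, Complex.norm_of_nonneg (hI hs).1.le]
    exact (hI hs).2
  obtain ⟨a', b', W, ha, hab', hb, cW, hWQ, hW⟩ := h.exists_isIntegratedWave hp
    (hab.1.trans hab.2) hI fun s hs => hC s (hball s hs)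
  have hmid : (a' + b') / 2 ∈ Icc a' b' := ⟨by linarith, by linarith⟩
  have hsub' : Icc a' b' ⊆ Icc a b := Icc_subset_Icc ha hb
  refine (hsub (hsub' hmid)).2 ((hWQ _ hmid hz).symm.trans ?_)
  exact hW.eq_zero_midpoint hR (hI (hsub' (left_mem_Icc.2 hab'.le))).1.le hab'
    (hI (hsub' (right_mem_Icc.2 hab'.le))).2 hΛ hC cW hp hz

end IsCharWave

end CharWave

section Uniqueness

/-- The complex kernel `k + i k_c` as a function of the characteristic coordinates
`z = (x + y, x - y)`. -/
noncomputable def charKernel (k kc : ℝ → ℝ → ℝ → ℝ) (t : ℝ) (z : ℝ × ℝ) : ℂ :=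
  k ((z.1 + z.2) / 2) ((z.1 - z.2) / 2) t
    + Complex.I * kc ((z.1 + z.2) / 2) ((z.1 - z.2) / 2) t

theorem charKernel_apply (k kc : ℝ → ℝ → ℝ → ℝ) (x y t : ℝ) :
    charKernel k kc t (x + y, x - y) = k x y t + Complex.I * kc x y t := by
  simp only [charKernel, add_add_sub_cancel, add_sub_sub_cancel, add_self_div_two]

theorem charCoordinates_mem_Omega {z : ℝ × ℝ} (hz : z ∈ charTriangle) :
    ((z.1 + z.2) / 2, (z.1 - z.2) / 2) ∈ Omega := by
  rw [← mem_Omega_iff_char]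
  convert hz using 1
  ext <;> simp only <;> ring

namespace IsNeumannKernelSol

variable {β βc : ℝ → ℝ → ℝ → ℝ} {p₁ p₂ q₁ q₂ t₀ t : ℝ} {k kc k' kc' : ℝ → ℝ → ℝ → ℝ}
  {ℓ : ℝ → ℝ × ℝ → ℂ} {z : ℝ × ℝ}

theorem contDiffOn_charKernel (h : IsNeumannKernelSol β βc p₁ p₂ q₁ q₂ t₀ k kc)
    (ht : t ∈ Ioo 0 t₀) : ContDiffOn ℝ 2 (charKernel k kc t) charTriangle := by
  have kernel : ContDiffOn ℝ 2 (fun w : ℝ × ℝ => (k w.1 w.2 t : ℂ) + Complex.I * kc w.1 w.2 t)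
      Omega :=
    (Complex.ofRealCLM.contDiff.comp_contDiffOn (h.1 t ht)).add
      (contDiffOn_const.mul (Complex.ofRealCLM.contDiff.comp_contDiffOn (h.2.1 t ht)))
  exact kernel.comp (f := fun z : ℝ × ℝ => ((z.1 + z.2) / 2, (z.1 - z.2) / 2)) (by fun_prop)
    fun z hz => charCoordinates_mem_Omega hz

theorem hasDerivAt_charKernel (h : IsNeumannKernelSol β βc p₁ p₂ q₁ q₂ t₀ k kc)
    (ht : t ∈ Ioo 0 t₀) (hz : z ∈ charTriangle) :
    HasDerivAt (fun t => charKernel k kc t z) (charKernel (pT k) (pT kc) t z) t :=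
  have ⟨hk, hkc⟩ := h.2.2.1 _ _ (charCoordinates_mem_Omega hz) t ht
  hk.hasDerivAt.ofReal_comp.add (hkc.hasDerivAt.ofReal_comp.const_mul Complex.I)

theorem four_mul_mixedDeriv_charKernel (h : IsNeumannKernelSol β βc p₁ p₂ p₁ (-p₂) t₀ k kc)
    (hβ : ∀ x y t, ℓ t (x + y, x - y) = β x y t - Complex.I * βc x y t) (ht : t ∈ Ioo 0 t₀)
    (hz : z ∈ interior charTriangle) :
    4 * mixedDeriv (charKernel k kc t) z = ℓ t z * charKernel k kc t z
      + (p₁ - Complex.I * p₂) * deriv (fun t => charKernel k kc t z) t := by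
  have hz' := interior_subset hz
  rw [(h.hasDerivAt_charKernel ht hz').deriv]
  obtain ⟨x, y, rfl⟩ : ∃ x y, z = (x + y, x - y) :=
    ⟨(z.1 + z.2) / 2, (z.1 - z.2) / 2, by ext <;> simp only <;> ring⟩
  have smooth := (h.contDiffOn_charKernel ht).contDiffAt (mem_interior_iff_mem_nhds.1 hz)
  have re_wave := wave_equation_of_mixedDeriv Complex.reCLM smooth
  have im_wave := wave_equation_of_mixedDeriv Complex.imCLM smooth
  simp only [charKernel_apply, Complex.reCLM_apply, Complex.imCLM_apply, Complex.add_re,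
    Complex.add_im, Complex.ofReal_re, Complex.ofReal_im, Complex.I_mul_re, Complex.I_mul_im,
    neg_zero, add_zero, zero_add] at re_wave im_wave
  obtain ⟨equation, equation_c⟩ := h.2.2.2.1 x y (mem_Omega_iff_char.1 hz') t ht
  have re_eq := add_left_cancel (re_wave.symm.trans
    (equation.trans (by ring : _ = pYY k x y t + (β x y t * k x y t + βc x y t * kc x y t
      + p₁ * pT k x y t + p₂ * pT kc x y t))))
  have im_eq := add_left_cancel (im_wave.symm.trans
    (equation_c.trans (by ring : _ = pYY kc x y t + (-βc x y t * k x y t + β x y t * kc x y t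
      + p₁ * pT kc x y t - p₂ * pT k x y t))))
  refine Complex.ext (re_eq.trans ?_) (im_eq.trans ?_) <;> simp [charKernel_apply, hβ] <;> ring

theorem apply_zero_right (h : IsNeumannKernelSol β βc p₁ p₂ q₁ q₂ t₀ k kc) (ht : t ∈ Ioo 0 t₀)
    {x : ℝ} (hx : x ∈ Icc (0 : ℝ) 1) : k x 0 t = 0 ∧ kc x 0 t = 0 := by
  have constant : ∀ {g : ℝ → ℝ → ℝ → ℝ}, ContDiffOn ℝ 2 (fun w : ℝ × ℝ => g w.1 w.2 t) Omega →
      (∀ x ∈ Icc (0 : ℝ) 1, pX g x 0 t = 0) → g 0 0 t = 0 → g x 0 t = 0 := fun {g} hg hgx hg₀ => by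
    have edge : DifferentiableOn ℝ (fun x => g x 0 t) (Icc 0 1) :=
      (hg.differentiableOn two_ne_zero).comp (f := fun x : ℝ => (x, (0 : ℝ))) (by fun_prop)
        fun x hx => ⟨le_rfl, hx.1, hx.2⟩
    have deriv_eq : ∀ x ∈ interior (Icc (0 : ℝ) 1), deriv (fun x => g x 0 t) x = 0 :=
      fun x hx => hgx x (interior_subset hx)
    have hx₀ : (0 : ℝ) ∈ Icc (0 : ℝ) 1 := left_mem_Icc.2 zero_le_one
    exact (le_antisymm
      (antitoneOn_of_deriv_nonpos (convex_Icc 0 1) edge.continuousOn (edge.mono interior_subset)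
        (fun x hx => (deriv_eq x hx).le) hx₀ hx hx.1)
      (monotoneOn_of_deriv_nonneg (convex_Icc 0 1) edge.continuousOn (edge.mono interior_subset)
        (fun x hx => (deriv_eq x hx).ge) hx₀ hx hx.1)).trans hg₀
  exact ⟨constant (h.1 t ht) (fun x hx => (h.2.2.2.2.1 x hx t ht).2.2.1) (h.2.2.2.2.2 t ht).1,
    constant (h.2.1 t ht) (fun x hx => (h.2.2.2.2.1 x hx t ht).2.2.2) (h.2.2.2.2.2 t ht).2⟩

theorem charKernel_diagonal (h : IsNeumannKernelSol β βc p₁ p₂ q₁ q₂ t₀ k kc) (ht : t ∈ Ioo 0 t₀)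
    {s : ℝ} (hs : (s, s) ∈ charTriangle) : charKernel k kc t (s, s) = 0 := by
  obtain ⟨hk, hkc⟩ := h.apply_zero_right ht ⟨hs.1, by linarith [hs.2.2]⟩ (x := s)
  simp [charKernel, hk, hkc]

theorem charKernel_axis (h : IsNeumannKernelSol β βc p₁ p₂ q₁ q₂ t₀ k kc) (ht : t ∈ Ioo 0 t₀)
    {s : ℝ} (hs : (s, 0) ∈ charTriangle) :
    charKernel k kc t (s, 0) = ((-(1 / 2) * ∫ γ in (0 : ℝ)..s / 2, β γ γ t : ℝ) : ℂ)
      + Complex.I * ((1 / 2) * ∫ γ in (0 : ℝ)..s / 2, βc γ γ t : ℝ) := by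
  obtain ⟨-, hs₀, hs₂⟩ := hs
  obtain ⟨hk, hkc, -⟩ := h.2.2.2.2.1 (s / 2) ⟨by linarith, by linarith⟩ t ht
  rw [charKernel, add_zero, sub_zero, hk, hkc]

theorem isCharWave_sub (h : IsNeumannKernelSol β βc p₁ p₂ p₁ (-p₂) t₀ k kc)
    (h' : IsNeumannKernelSol β βc p₁ p₂ p₁ (-p₂) t₀ k' kc')
    (hβ : ∀ x y t, ℓ t (x + y, x - y) = β x y t - Complex.I * βc x y t)
    {Λ : ℂ → ℝ × ℝ →ᵇ ℂ} (hΛ : ∀ t ∈ Ioo 0 t₀, EqOn (Λ t) (ℓ t) charTriangle) :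
    IsCharWave Λ (p₁ - Complex.I * p₂) (Ioo 0 t₀)
      fun t => charKernel k' kc' t - charKernel k kc t where
  contDiffOn t ht := (h'.contDiffOn_charKernel ht).sub (h.contDiffOn_charKernel ht)
  differentiableAt z hz t ht := (h'.hasDerivAt_charKernel ht hz).differentiableAt.sub
    (h.hasDerivAt_charKernel ht hz).differentiableAt
  equation t ht z hz := by
    have hz' := interior_subset hz
    have hnhds := mem_interior_iff_mem_nhds.1 hz
    simp only [Pi.sub_apply]
    rw [mixedDeriv_sub ((h'.contDiffOn_charKernel ht).contDiffAt hnhds)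
      ((h.contDiffOn_charKernel ht).contDiffAt hnhds), mul_sub,
      h'.four_mul_mixedDeriv_charKernel hβ ht hz, h.four_mul_mixedDeriv_charKernel hβ ht hz,
      deriv_fun_sub (h'.hasDerivAt_charKernel ht hz').differentiableAt
        (h.hasDerivAt_charKernel ht hz').differentiableAt, hΛ t ht hz']
    ring
  diagonal t ht s hs := by
    rw [Pi.sub_apply, h'.charKernel_diagonal ht hs, h.charKernel_diagonal ht hs, sub_self]
  axis t ht s hs := by
    rw [Pi.sub_apply, h'.charKernel_axis ht hs, h.charKernel_axis ht hs, sub_self]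

theorem unique (h : IsNeumannKernelSol β βc p₁ p₂ p₁ (-p₂) t₀ k kc)
    (h' : IsNeumannKernelSol β βc p₁ p₂ p₁ (-p₂) t₀ k' kc')
    (series : HasBoundedTimeSeries ℓ charTriangle)
    (hβ : ∀ x y t, ℓ t (x + y, x - y) = β x y t - Complex.I * βc x y t)
    (hp : (p₁ : ℂ) - Complex.I * p₂ ≠ 0) (ht₀ : t₀ < 1) {x y : ℝ} (hxy : (x, y) ∈ Omega)
    (ht : t ∈ Ioo 0 t₀) : k' x y t = k x y t ∧ kc' x y t = kc x y t := by
  obtain ⟨Λ, C, hΛ, hC, hΛℓ⟩ := series.exists_holomorphic ⟨ht.1.trans ht.2, ht₀⟩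
  have wave := h.isCharWave_sub h' hβ fun t ht => hΛℓ t ⟨ht.1.le, ht.2⟩
  have vanish := wave.eq_zero hp ht₀.le hΛ hC ht (mem_Omega_iff_char.2 hxy)
  simpa [charKernel_apply, sub_eq_zero, Complex.ext_iff] using vanish

end IsNeumannKernelSol

end Uniqueness

section MainTheorem

theorem kernelPotential_char {aR aI : ℝ} (ha : aR ^ 2 + aI ^ 2 ≠ 0) (bR bI fR fI : ℝ → ℝ → ℝ)
    (x y t : ℝ) :
    kernelPotential ((aR / (aR ^ 2 + aI ^ 2) : ℝ) - Complex.I * (-aI / (aR ^ 2 + aI ^ 2) : ℝ))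
      bR bI fR fI t (x + y, x - y)
      = (((aR * (bR y t - fR x t) + aI * (bI y t - fI x t)) / (aR ^ 2 + aI ^ 2) : ℝ) : ℂ)
        - Complex.I
          * ((aR * (bI y t - fI x t) - aI * (bR y t - fR x t)) / (aR ^ 2 + aI ^ 2) : ℝ) := by
  have ha' : (aR : ℂ) ^ 2 + (aI : ℂ) ^ 2 ≠ 0 := mod_cast ha
  simp only [kernelPotential, add_add_sub_cancel, add_sub_sub_cancel, add_self_div_two]
  push_cast
  field_simp
  linear_combination -(aI : ℂ) * ((bI y t : ℂ) - fI x t) * Complex.I_sq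

theorem kernelTimeCoefficient_ne_zero {aR aI : ℝ} (ha : aR ^ 2 + aI ^ 2 ≠ 0) :
    ((aR / (aR ^ 2 + aI ^ 2) : ℝ) : ℂ) - Complex.I * (-aI / (aR ^ 2 + aI ^ 2) : ℝ) ≠ 0 := by
  have eq_zero_iff : ∀ u v : ℝ, (u : ℂ) - Complex.I * v = 0 ↔ u = 0 ∧ v = 0 := fun u v => by
    simp [Complex.ext_iff]
  rw [Ne, eq_zero_iff, div_eq_zero_iff, div_eq_zero_iff, or_iff_left ha, or_iff_left ha,
    neg_eq_zero]
  rintro ⟨rfl, rfl⟩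
  norm_num at ha

theorem le_mul_exp_mul_sq_sub_sq {B x y : ℝ} (hxy : (x, y) ∈ Omega) :
    B ≤ max B 1 * Real.exp (max B 1 * (x ^ 2 - y ^ 2)) :=
  (le_max_left B 1).trans (le_mul_of_one_le_right (by positivity) (Real.one_le_exp
    (mul_nonneg (by positivity) (sub_nonneg.2 (pow_le_pow_left₀ hxy.1 hxy.2.1 2)))))

end MainTheorem

theorem neumann_kernel_existence_uniqueness_bound_general
    (aR aI : ℝ) (ha : aR ^ 2 + aI ^ 2 ≠ 0)
    (p₁ p₂ q₁ q₂ : ℝ)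
    (hp₁ : p₁ = aR / (aR ^ 2 + aI ^ 2)) (hq₁ : q₁ = aR / (aR ^ 2 + aI ^ 2))
    (hp₂ : p₂ = -aI / (aR ^ 2 + aI ^ 2)) (hq₂ : q₂ = aI / (aR ^ 2 + aI ^ 2))
    (bR bI fR fI : ℝ → ℝ → ℝ)
    (hbR : SpaceC1TimeAnalytic bR) (hbI : SpaceC1TimeAnalytic bI)
    (hfR : SpaceC1TimeAnalytic fR) (hfI : SpaceC1TimeAnalytic fI)
    (β βc : ℝ → ℝ → ℝ → ℝ)
    (hβ : ∀ x y t : ℝ, β x y t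
      = (aR * (bR y t - fR x t) + aI * (bI y t - fI x t)) / (aR ^ 2 + aI ^ 2))
    (hβc : ∀ x y t : ℝ, βc x y t
      = (aR * (bI y t - fI x t) - aI * (bR y t - fR x t)) / (aR ^ 2 + aI ^ 2))
    (t₀ : ℝ) (ht₀ : t₀ ∈ Ioo (0 : ℝ) 1) :
    ∃ k kc : ℝ → ℝ → ℝ → ℝ,
      IsNeumannKernelSol β βc p₁ p₂ q₁ q₂ t₀ k kc
      ∧ (∀ k' kc' : ℝ → ℝ → ℝ → ℝ,
          IsNeumannKernelSol β βc p₁ p₂ q₁ q₂ t₀ k' kc' →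
          ∀ x y : ℝ, (x, y) ∈ Omega → ∀ t ∈ Ioo (0 : ℝ) t₀,
            k' x y t = k x y t ∧ kc' x y t = kc x y t)
      ∧ ∃ M : ℝ, 0 < M ∧ ∀ x y : ℝ, (x, y) ∈ Omega → ∀ t ∈ Ioo (0 : ℝ) t₀,
          |k x y t| ≤ M * Real.exp (M * (x ^ 2 - y ^ 2))
          ∧ |kc x y t| ≤ M * Real.exp (M * (x ^ 2 - y ^ 2)) := by
  obtain rfl : q₁ = p₁ := hq₁.trans hp₁.symm
  obtain rfl : q₂ = -p₂ := by rw [hq₂, hp₂, neg_div, neg_neg]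
  have potential : ∀ x y t, kernelPotential (q₁ - Complex.I * p₂) bR bI fR fI t (x + y, x - y)
      = β x y t - Complex.I * βc x y t := fun x y t => by
    rw [hβ, hβc, hp₁, hp₂, kernelPotential_char ha]
  have hp : (q₁ : ℂ) - Complex.I * p₂ ≠ 0 := by
    rw [hp₁, hp₂]
    exact kernelTimeCoefficient_ne_zero ha
  have series := hasBoundedTimeSeries_kernelPotential hbR hbI hfR hfI (q₁ - Complex.I * p₂)
  obtain ⟨k, kc, sol, B, hB⟩ := exists_bounded_isNeumannKernelSol series
    (fun _ => exists_contDiff_extension_kernelPotential hbR hbI hfR hfI _) potential q₁ p₂ ht₀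
  refine ⟨k, kc, sol, fun k' kc' sol' x y hxy t ht =>
    sol.unique sol' series potential hp ht₀.2 hxy ht, max B 1, by positivity,
    fun x y hxy t ht => ⟨?_, ?_⟩⟩
  exacts [(hB x y hxy t ht).1.trans (le_mul_exp_mul_sq_sub_sq hxy),
    (hB x y hxy t ht).2.trans (le_mul_exp_mul_sq_sub_sq hxy)]

/-- existence, uniqueness and exponential bound for the backstepping
kernel pair `(k, k_c)` of the Neumann boundary-control problem. -/
theorem neumann_kernel_existence_uniqueness_bound
    (aR aI : ℝ) (haR : 0 < aR)
    (p₁ p₂ q₁ q₂ : ℝ)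
    (hp₁ : p₁ = aR / (aR ^ 2 + aI ^ 2)) (hq₁ : q₁ = aR / (aR ^ 2 + aI ^ 2))
    (hp₂ : p₂ = -aI / (aR ^ 2 + aI ^ 2)) (hq₂ : q₂ = aI / (aR ^ 2 + aI ^ 2))
    (bR bI fR fI : ℝ → ℝ → ℝ)
    (hbR : SpaceC1TimeAnalytic bR) (hbI : SpaceC1TimeAnalytic bI)
    (hfR : SpaceC1TimeAnalytic fR) (hfI : SpaceC1TimeAnalytic fI)
    (β βc : ℝ → ℝ → ℝ → ℝ)
    (hβ : ∀ x y t : ℝ, β x y t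
      = (aR * (bR y t - fR x t) + aI * (bI y t - fI x t)) / (aR ^ 2 + aI ^ 2))
    (hβc : ∀ x y t : ℝ, βc x y t
      = (aR * (bI y t - fI x t) - aI * (bR y t - fR x t)) / (aR ^ 2 + aI ^ 2))
    (t₀ : ℝ) (ht₀ : t₀ ∈ Ioo (0:ℝ) 1) :
    ∃ k kc : ℝ → ℝ → ℝ → ℝ,
      IsNeumannKernelSol β βc p₁ p₂ q₁ q₂ t₀ k kc
      ∧ (∀ k' kc' : ℝ → ℝ → ℝ → ℝ,
          IsNeumannKernelSol β βc p₁ p₂ q₁ q₂ t₀ k' kc' →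
          ∀ x y : ℝ, (x, y) ∈ Omega → ∀ t ∈ Ioo (0:ℝ) t₀,
            k' x y t = k x y t ∧ kc' x y t = kc x y t)
      ∧ ∃ M : ℝ, 0 < M ∧ ∀ x y : ℝ, (x, y) ∈ Omega → ∀ t ∈ Ioo (0:ℝ) t₀,
          |k x y t| ≤ M * Real.exp (M * (x ^ 2 - y ^ 2))
          ∧ |kc x y t| ≤ M * Real.exp (M * (x ^ 2 - y ^ 2)) := by
  exact neumann_kernel_existence_uniqueness_bound_general aR aI (by positivity) p₁ p₂ q₁ q₂ hp₁ hq₁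
    hp₂ hq₂ bR bI fR fI hbR hbI hfR hfI β βc hβ hβc t₀ ht₀
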